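/- arXiv:2007.02740 — 2 statements merged into one kernel-verified Lean document; each statement's English description precedes it below -/
import Mathlib

section
/- For all non-constant monotone functions f : {0,1}^m → {0,1} and g : {0,1}^n → {0,1}, the communication problem mKW_f ⊛ mKW_g reduces to mKW_f ◇ mKW_g; that is, there exist maps R_A, R_B on the two players' inputs and R_out on outputs forming a reduction. -/
open Classical

noncomputable section

/-! ### Deterministic communication protocols -/

/-- A deterministic communication protocol: a finite binary protocol tree whose
leaves are labeled by outputs in `O`.  At a `nodeA` vertex Alice sends a bit
(computed from her input), at a `nodeB` vertex Bob sends a bit. -/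
inductive Protocol (X Y O : Type) : Type where
  | leaf : O → Protocol X Y O
  | nodeA : (X → Bool) → Protocol X Y O → Protocol X Y O → Protocol X Y O
  | nodeB : (Y → Bool) → Protocol X Y O → Protocol X Y O → Protocol X Y O

namespace Protocol

variable {X Y O : Type}

/-- The output of the protocol on an input pair. -/
def run : Protocol X Y O → X → Y → O
  | leaf o, _, _ => o
  | nodeA h p0 p1, x, y => if h x then run p1 x y else run p0 x y
  | nodeB h p0 p1, x, y => if h y then run p1 x y else run p0 x y

/-- Depth (communication complexity) of a protocol tree. -/
def depth : Protocol X Y O → ℕ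
  | leaf _ => 0
  | nodeA _ p0 p1 => max (depth p0) (depth p1) + 1
  | nodeB _ p0 p1 => max (depth p0) (depth p1) + 1

/-- Number of leaves (protocol size). -/
def leaves : Protocol X Y O → ℕ
  | leaf _ => 1
  | nodeA _ p0 p1 => leaves p0 + leaves p1
  | nodeB _ p0 p1 => leaves p0 + leaves p1

/-- `followsA p π x` : Alice's input `x` is consistent with the partial transcript `π`,
i.e. `x` belongs to the Alice-side `𝒳_π` of the rectangle associated with the vertex `π`. -/
def followsA : Protocol X Y O → List Bool → X → Prop
  | _, [], _ => True
  | leaf _, _ :: _, _ => False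
  | nodeA h p0 p1, b :: rest, x =>
      h x = b ∧ (if b then followsA p1 rest x else followsA p0 rest x)
  | nodeB _ p0 p1, b :: rest, x =>
      if b then followsA p1 rest x else followsA p0 rest x

/-- `followsB p π y` : Bob's input `y` is consistent with the partial transcript `π`,
i.e. `y` belongs to the Bob-side `𝒴_π` of the rectangle associated with the vertex `π`. -/
def followsB : Protocol X Y O → List Bool → Y → Prop
  | _, [], _ => True
  | leaf _, _ :: _, _ => False
  | nodeA _ p0 p1, b :: rest, y =>
      if b then followsB p1 rest y else followsB p0 rest y
  | nodeB h p0 p1, b :: rest, y =>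
      h y = b ∧ (if b then followsB p1 rest y else followsB p0 rest y)

/-- The subtree of the protocol reached by following a partial transcript. -/
def subtree : Protocol X Y O → List Bool → Option (Protocol X Y O)
  | p, [] => some p
  | leaf _, _ :: _ => none
  | nodeA _ p0 p1, b :: rest => if b then subtree p1 rest else subtree p0 rest
  | nodeB _ p0 p1, b :: rest => if b then subtree p1 rest else subtree p0 rest

/-- `π` is a (partial or full) transcript of the protocol, i.e. a vertex of the protocol tree. -/
def IsTranscript (p : Protocol X Y O) (π : List Bool) : Prop :=
  (subtree p π).isSome = true

/-- `π` is a full transcript of the protocol, i.e. a root-to-leaf path. -/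
def IsFullTranscript (p : Protocol X Y O) (π : List Bool) : Prop :=
  ∃ o : O, subtree p π = some (leaf o)

end Protocol

/-- A protocol solves a communication problem `S` if on every input pair it
outputs a valid output. -/
def Solves {X Y O : Type} (p : Protocol X Y O) (S : X → Y → O → Prop) : Prop :=
  ∀ x y, S x y (p.run x y)

/-- `L(S)`: minimal number of leaves of a protocol solving `S`. -/
def Lsize {X Y O : Type} (S : X → Y → O → Prop) : ℕ :=
  sInf {k | ∃ p : Protocol X Y O, Solves p S ∧ p.leaves = k}

/-- `CC(S)`: the deterministic communication complexity (minimal depth) of `S`. -/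
def CC {X Y O : Type} (S : X → Y → O → Prop) : ℕ :=
  sInf {k | ∃ p : Protocol X Y O, Solves p S ∧ p.depth = k}

/-! ### Decision trees and query complexity -/

inductive DTree (ι O : Type) : Type where
  | leaf : O → DTree ι O
  | node : ι → DTree ι O → DTree ι O → DTree ι O

namespace DTree

variable {ι O : Type}

def run : DTree ι O → (ι → Bool) → O
  | leaf o, _ => o
  | node i t0 t1, z => if z i then run t1 z else run t0 z

def depth : DTree ι O → ℕ
  | leaf _ => 0
  | node _ t0 t1 => max (depth t0) (depth t1) + 1

end DTree

def DSolves {ι O : Type} (T : DTree ι O) (S : (ι → Bool) → O → Prop) : Prop :=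
  ∀ z, S z (T.run z)

/-- `Q(S)`: the deterministic query complexity of the search problem `S`. -/
def Qcomplexity {ι O : Type} (S : (ι → Bool) → O → Prop) : ℕ :=
  sInf {k | ∃ T : DTree ι O, DSolves T S ∧ T.depth = k}

/-! ### Monotone Karchmer–Wigderson relations -/

/-- The monotone KW relation of a rectangle `A × B`: find `i` with `x i > y i`. -/
def mKWrect {ι : Type} (A B : Set (ι → Bool)) : ↥A → ↥B → ι → Prop :=
  fun x y i => x.val i = true ∧ y.val i = false

/-- `mL(A × B)`: the monotone formula complexity of the rectangle `A × B`. -/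
def mL {ι : Type} (A B : Set (ι → Bool)) : ℕ := Lsize (mKWrect A B)

/-- The monotone KW relation of a monotone function `f`. -/
def mKW {ι : Type} (f : (ι → Bool) → Bool) :
    {x : ι → Bool // f x = true} → {y : ι → Bool // f y = false} → ι → Prop :=
  fun x y i => x.val i = true ∧ y.val i = false

/-! ### Lifted search problems, discrepancy, reductions -/

/-- The lifted search problem `S ◇ gd`. -/
def liftSP {ι Λ O : Type} (S : (ι → Bool) → O → Prop) (gd : Λ → Λ → Bool) :
    (ι → Λ) → (ι → Λ) → O → Prop :=
  fun x y o => S (fun i => gd (x i) (y i)) o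

/-- The discrepancy of a gadget `gd : {0,1}^t × {0,1}^t → {0,1}`. -/
def disc {t : ℕ} (gd : (Fin t → Bool) → (Fin t → Bool) → Bool) : ℝ :=
  sSup {r : ℝ | ∃ A B : Finset (Fin t → Bool),
    r = |((((A ×ˢ B).filter fun uv => gd uv.1 uv.2 = false).card : ℝ) -
          (((A ×ˢ B).filter fun uv => gd uv.1 uv.2 = true).card : ℝ))| /
        ((2 ^ t : ℝ) * (2 ^ t : ℝ))}

/-- A (rectangular) reduction between communication problems. -/
def Reduces {X Y O X' Y' O' : Type}
    (S : X → Y → O → Prop) (S' : X' → Y' → O' → Prop) : Prop :=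
  ∃ (RA : X → X') (RB : Y → Y') (Rout : O' → O),
    ∀ x y o', S' (RA x) (RB y) o' → S x y (Rout o')

/-- An injective reduction between communication problems. -/
def ReducesInj {X Y O X' Y' O' : Type}
    (S : X → Y → O → Prop) (S' : X' → Y' → O' → Prop) : Prop :=
  ∃ (RA : X → X') (RB : Y → Y') (Rout : O' → O),
    Function.Injective RA ∧ Function.Injective RB ∧
    ∀ x y o', S' (RA x) (RB y) o' → S x y (Rout o')

/-! ### Compositions -/

/-- `mKW_f ◇ mKW_g := mKW_{f ◇ g}` : Alice gets `X ∈ (f◇g)⁻¹(1)`, Bob gets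
`Y ∈ (f◇g)⁻¹(0)`, and they must find an entry `(i,j)` with `X i j > Y i j`. -/
def diamondKW {m : ℕ} {ι : Type} (f : (Fin m → Bool) → Bool) (g : (ι → Bool) → Bool) :
    {X : Fin m → ι → Bool // f (fun i => g (X i)) = true} →
    {Y : Fin m → ι → Bool // f (fun i => g (Y i)) = false} →
    (Fin m × ι) → Prop :=
  fun X Y e => X.val e.1 e.2 = true ∧ Y.val e.1 e.2 = false

/-- `mKW_f ⊛ mKW_g` : same inputs as `mKW_f ◇ mKW_g`, but valid outputs are entries
`(i,j)` with `a_i > b_i` and `X i j > Y i j`, where `a_i = g(X_i)`, `b_i = g(Y_i)`. -/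
def starKW {m : ℕ} {ι : Type} (f : (Fin m → Bool) → Bool) (g : (ι → Bool) → Bool) :
    {X : Fin m → ι → Bool // f (fun i => g (X i)) = true} →
    {Y : Fin m → ι → Bool // f (fun i => g (Y i)) = false} →
    (Fin m × ι) → Prop :=
  fun X Y e => g (X.val e.1) = true ∧ g (Y.val e.1) = false ∧
    X.val e.1 e.2 = true ∧ Y.val e.1 e.2 = false

/-- `mKW_f ⊛ (S ◇ gd)` : Alice gets `X ∈ Λ^{m×ℓ}` and `a ∈ f⁻¹(1)`, Bob gets
`Y ∈ Λ^{m×ℓ}` and `b ∈ f⁻¹(0)`; valid outputs are pairs `(i,o)` with `a_i > b_i`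
and `o` a valid output of `S ◇ gd` on the rows `(X_i, Y_i)`. -/
def starLift {m ℓ : ℕ} {Λ O : Type} (f : (Fin m → Bool) → Bool)
    (S : (Fin ℓ → Bool) → O → Prop) (gd : Λ → Λ → Bool) :
    ((Fin m → Fin ℓ → Λ) × {a : Fin m → Bool // f a = true}) →
    ((Fin m → Fin ℓ → Λ) × {b : Fin m → Bool // f b = false}) →
    (Fin m × O) → Prop :=
  fun Xa Yb io =>
    Xa.2.val io.1 = true ∧ Yb.2.val io.1 = false ∧
      liftSP S gd (Xa.1 io.1) (Yb.1 io.1) io.2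

/-! ### Live transcripts -/

/-- `𝒜_{π,W}` : the vectors `a ∈ f⁻¹(1)` such that `(W,a)` is consistent with `π`. -/
def Aset {m ℓ : ℕ} {Λ O : Type} (f : (Fin m → Bool) → Bool)
    (Pr : Protocol ((Fin m → Fin ℓ → Λ) × {a : Fin m → Bool // f a = true})
                   ((Fin m → Fin ℓ → Λ) × {b : Fin m → Bool // f b = false}) (Fin m × O))
    (π : List Bool) (W : Fin m → Fin ℓ → Λ) : Set (Fin m → Bool) :=
  {a | ∃ h : f a = true, Protocol.followsA Pr π (W, ⟨a, h⟩)}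

/-- `ℬ_{π,W}` : the vectors `b ∈ f⁻¹(0)` such that `(W,b)` is consistent with `π`. -/
def Bset {m ℓ : ℕ} {Λ O : Type} (f : (Fin m → Bool) → Bool)
    (Pr : Protocol ((Fin m → Fin ℓ → Λ) × {a : Fin m → Bool // f a = true})
                   ((Fin m → Fin ℓ → Λ) × {b : Fin m → Bool // f b = false}) (Fin m × O))
    (π : List Bool) (W : Fin m → Fin ℓ → Λ) : Set (Fin m → Bool) :=
  {b | ∃ h : f b = false, Protocol.followsB Pr π (W, ⟨b, h⟩)}

/-- `γ(π)` : the average over uniform `W ∈ Λ^{m×ℓ}` of `mL(𝒜_{π,W} × ℬ_{π,W})`. -/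
def gammaM {m ℓ : ℕ} {Λ O : Type} [Fintype Λ] [DecidableEq Λ] (f : (Fin m → Bool) → Bool)
    (Pr : Protocol ((Fin m → Fin ℓ → Λ) × {a : Fin m → Bool // f a = true})
                   ((Fin m → Fin ℓ → Λ) × {b : Fin m → Bool // f b = false}) (Fin m × O))
    (π : List Bool) : ℝ :=
  (∑ W : Fin m → Fin ℓ → Λ, (mL (Aset f Pr π W) (Bset f Pr π W) : ℝ)) /
    (Fintype.card (Fin m → Fin ℓ → Λ) : ℝ)

/-- A transcript is live (alive) if it is a vertex of the protocol tree and `γ(π) ≥ 4m²`. -/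
def LiveT {m ℓ : ℕ} {Λ O : Type} [Fintype Λ] [DecidableEq Λ] (f : (Fin m → Bool) → Bool)
    (Pr : Protocol ((Fin m → Fin ℓ → Λ) × {a : Fin m → Bool // f a = true})
                   ((Fin m → Fin ℓ → Λ) × {b : Fin m → Bool // f b = false}) (Fin m × O))
    (π : List Bool) : Prop :=
  Protocol.IsTranscript Pr π ∧ 4 * (m : ℝ) ^ 2 ≤ gammaM f Pr π

/-! ### Average degree -/

/-- Projection of a set of strings to the coordinates in `J`. -/
def projSet {N Λ : Type} (W : Set (N → Λ)) (J : Set N) : Set (↥J → Λ) :=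
  (fun w (j : ↥J) => w j.val) '' W

/-- Relative average degree: `rAvgDeg_I(W) = (|W| / |W|_{N−I}|) / |Λ|^{|I|}`. -/
def rAvgDeg {N Λ : Type} [Fintype Λ] (W : Set (N → Λ)) (I : Set N) : ℝ :=
  ((W.ncard : ℝ) / ((projSet W Iᶜ).ncard : ℝ)) / ((Fintype.card Λ : ℝ) ^ I.ncard)

/-- View a set of `m × ℓ` matrices as a set of strings indexed by `Fin m × Fin ℓ`. -/
def matSet {m ℓ : ℕ} {Λ : Type} (WW : Set (Fin m → Fin ℓ → Λ)) : Set (Fin m × Fin ℓ → Λ) :=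
  (fun W p => W p.1 p.2) '' WW

/-! ### Hard collections -/

/-- A transcript `π` supports the collection `(𝒲, a^W, b^W)` if for every `W ∈ 𝒲`,
`(W, a^W) ∈ 𝒳_π` and `(W, b^W) ∈ 𝒴_π`. -/
def SupportsCollection {m ℓ : ℕ} {Λ O : Type} (f : (Fin m → Bool) → Bool)
    (Pr : Protocol ((Fin m → Fin ℓ → Λ) × {a : Fin m → Bool // f a = true})
                   ((Fin m → Fin ℓ → Λ) × {b : Fin m → Bool // f b = false}) (Fin m × O))
    (π : List Bool) (WW : Set (Fin m → Fin ℓ → Λ))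
    (aW bW : (Fin m → Fin ℓ → Λ) → (Fin m → Bool)) : Prop :=
  ∀ W ∈ WW, aW W ∈ Aset f Pr π W ∧ bW W ∈ Bset f Pr π W

/-- The collection `(𝒲, a^W, b^W)` is hard: there is a set `R` of revealed rows such that
(i) every set `I` of unrevealed rows has relative average degree at least `4^{-|I|}` in the
restriction of `𝒲` to the unrevealed rows, and (ii) `a^W|_R ≤ b^{W'}|_R` for all `W, W' ∈ 𝒲`. -/
def HardCollection {m ℓ : ℕ} {Λ : Type} [Fintype Λ] (f : (Fin m → Bool) → Bool)
    (WW : Set (Fin m → Fin ℓ → Λ))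
    (aW bW : (Fin m → Fin ℓ → Λ) → (Fin m → Bool)) : Prop :=
  ∃ R : Set (Fin m),
    (∀ I : Set (Fin m), I ⊆ Rᶜ →
      ((1 : ℝ) / 4) ^ I.ncard ≤
        rAvgDeg (projSet (matSet WW) {p : Fin m × Fin ℓ | p.1 ∉ R})
          {q : ↥{p : Fin m × Fin ℓ | p.1 ∉ R} | q.val.1 ∈ I}) ∧
    (∀ W ∈ WW, ∀ W' ∈ WW, ∀ i ∈ R, aW W i ≤ bW W' i)

/-! ### CNF formulas, Nullstellensatz degree -/

/-- A clause over `ℓ` variables: a set of literals; `(i, true)` is the positive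
literal `x_i`, `(i, false)` is the negative literal `¬x_i`. -/
abbrev CnfClause (ℓ : ℕ) := Finset (Fin ℓ × Bool)

/-- An assignment satisfies a clause if some literal is satisfied. -/
def clauseSat {ℓ : ℕ} (z : Fin ℓ → Bool) (C : CnfClause ℓ) : Prop :=
  ∃ lit ∈ C, z lit.1 = lit.2

/-- The search problem `S_φ` : given an assignment, find a violated clause of `φ`. -/
def searchCNF {ℓ : ℕ} (φ : Finset (CnfClause ℓ)) :
    (Fin ℓ → Bool) → CnfClause ℓ → Prop :=
  fun z C => C ∈ φ ∧ ¬ clauseSat z C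

/-- The standard polynomial encoding of a clause. -/
def clausePoly {ℓ : ℕ} (C : CnfClause ℓ) : MvPolynomial (Fin ℓ) (ZMod 2) :=
  ∏ lit ∈ C, (if lit.2 then 1 - MvPolynomial.X lit.1 else MvPolynomial.X lit.1)

/-- The Nullstellensatz degree of a CNF contradiction `φ` over `F₂`. -/
def NSdeg {ℓ : ℕ} (φ : Finset (CnfClause ℓ)) : ℕ :=
  sInf {d : ℕ | ∃ (q : CnfClause ℓ → MvPolynomial (Fin ℓ) (ZMod 2))
      (r : Fin ℓ → MvPolynomial (Fin ℓ) (ZMod 2)),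
      ((∑ C ∈ φ, clausePoly C * q C) +
        ∑ i : Fin ℓ, (MvPolynomial.X i ^ 2 - MvPolynomial.X i) * r i) = 1 ∧
      (∀ C ∈ φ, (clausePoly C * q C).totalDegree ≤ d) ∧
      (∀ i : Fin ℓ, ((MvPolynomial.X i ^ 2 - MvPolynomial.X i) * r i).totalDegree ≤ d)}

/-- The equality gadget. -/
def eqGadget {Λ : Type} [DecidableEq Λ] : Λ → Λ → Bool := fun u v => decide (u = v)

/-! ### Semi-monotone composition -/

/-- `U_m ◇ mKW_g` : Alice gets `X`, Bob gets `Y`; with `a_i = g(X_i)`, `b_i = g(Y_i)`,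
valid outputs are entries `(i,j)` with (`a_i > b_i` and `X i j > Y i j`), or
(`a_i < b_i` and `X i j < Y i j`), or (`a_i = b_i` and `X i j ≠ Y i j`); if `a = b`
the players may output the failure symbol `⊥` (here `none`). -/
def semiU {m : ℕ} {ι : Type} (g : (ι → Bool) → Bool) :
    (Fin m → ι → Bool) → (Fin m → ι → Bool) → Option (Fin m × ι) → Prop :=
  fun X Y o =>
    match o with
    | none => ∀ i, g (X i) = g (Y i)
    | some e =>
        (g (X e.1) = true ∧ g (Y e.1) = false ∧ X e.1 e.2 = true ∧ Y e.1 e.2 = false) ∨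
        (g (X e.1) = false ∧ g (Y e.1) = true ∧ X e.1 e.2 = false ∧ Y e.1 e.2 = true) ∨
        (g (X e.1) = g (Y e.1) ∧ X e.1 e.2 ≠ Y e.1 e.2)

/-! ### Razborov rank measure over F₂ -/

/-- The maximal `F₂`-rank of the restriction of `A` to an `S`-monochromatic rectangle. -/
def monoMaxRank {X Y O : Type} [Fintype X] [Fintype Y]
    (S : X → Y → O → Prop) (A : Matrix X Y (ZMod 2)) : ℕ :=
  sSup {r : ℕ | ∃ (U : Finset X) (V : Finset Y) (o : O),
    (∀ x ∈ U, ∀ y ∈ V, S x y o) ∧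
    r = (A.submatrix (Subtype.val : {x // x ∈ U} → X)
          (Subtype.val : {y // y ∈ V} → Y)).rank}

/-- The Razborov rank measure `μ_{F₂}(S, A)`. -/
def muF2 {X Y O : Type} [Fintype X] [Fintype Y]
    (S : X → Y → O → Prop) (A : Matrix X Y (ZMod 2)) : ℝ :=
  (A.rank : ℝ) / (monoMaxRank S A : ℝ)

/-! ### Kronecker powers, pattern matrices -/

/-- The `m`-fold Kronecker power of a square matrix `B`, with index type `Fin m → ι`. -/
def kronPow {ι R : Type} [CommMonoid R] (m : ℕ) (B : Matrix ι ι R) :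
    Matrix (Fin m → ι) (Fin m → ι) R :=
  Matrix.of fun x y => ∏ i, B (x i) (y i)

/-- The pattern matrix `A_{x,y} = p(eq(x₁,y₁),…,eq(x_ℓ,y_ℓ))` of a multilinear
polynomial `p` with coefficients `phat` over `F₂`. -/
def patternMatrix {Λ : Type} [DecidableEq Λ] (ℓ : ℕ)
    (phat : Finset (Fin ℓ) → ZMod 2) : Matrix (Fin ℓ → Λ) (Fin ℓ → Λ) (ZMod 2) :=
  Matrix.of fun x y =>
    ∑ T : Finset (Fin ℓ), phat T * ∏ i ∈ T, (if x i = y i then (1 : ZMod 2) else 0)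

/-! ### s-t-connectivity -/

/-- The `s`-`t`-connectivity function: the input is the adjacency matrix of a directed
graph on `n` vertices, `s = 0`, `t = n-1`; output is whether `t` is reachable from `s`. -/
def stConn (n : ℕ) : ((Fin n × Fin n) → Bool) → Bool :=
  fun E =>
    if ∀ h : 0 < n,
        Relation.ReflTransGen (fun u v : Fin n => E (u, v) = true)
          ⟨0, h⟩ ⟨n - 1, Nat.sub_lt h Nat.one_pos⟩
      then true else false

/-! ### The matrix M of the semi-monotone composition theorem -/

/-- The matrix `M` used in the semi-monotone composition theorem, built from a matrix
`A ∈ F₂^{𝒳×𝒴}` (with `𝒳 = range xs`, `𝒴 = range ys` identified with `Fin K` via the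
left inverses `ix`, `iy`). -/
def semiM {m n K : ℕ} (g : (Fin n → Bool) → Bool) (xs ys : Fin K → (Fin n → Bool))
    (ix iy : (Fin n → Bool) → Fin K) (A : Matrix (Fin K) (Fin K) (ZMod 2)) :
    Matrix (Fin m → Fin n → Bool) (Fin m → Fin n → Bool) (ZMod 2) :=
  Matrix.of fun X Y =>
    if (fun i => g (X i)) = (fun i => g (Y i)) then 0
    else ∏ i : Fin m,
      (if g (X i) = true ∧ g (Y i) = false then A (ix (X i)) (iy (Y i))
       else if g (X i) = false ∧ g (Y i) = true then A (ix (Y i)) (iy (X i))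
       else if X i = Y i then 1 else 0)

end

/-! Alice erases every row `X i` with `g (X i) = false`, and Bob fills with ones every row `Y i`
with `g (Y i) = true`. Since `g ⊥ = false` and `g ⊤ = true`, the values of `g` on the rows do not
change, so the new matrices are legal inputs. A `1` survives only in Alice's rows with `a i = 1`
and a `0` only in Bob's rows with `b i = 0`, so any entry at which the new matrices differ in the
right direction already satisfies the extra condition `a i > b i` of `starKW`. -/

section MonotoneBounds

variable {α β : Type*} [Preorder α] [PartialOrder β] {g : α → β}

lemma map_bot_eq_bot_of_monotone [OrderBot α] [OrderBot β] (hg : Monotone g)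
    (h : ∃ x, g x = ⊥) : g ⊥ = ⊥ :=
  let ⟨_, hx⟩ := h
  eq_bot_mono (hg bot_le) hx

lemma map_top_eq_top_of_monotone [OrderTop α] [OrderTop β] (hg : Monotone g)
    (h : ∃ x, g x = ⊤) : g ⊤ = ⊤ :=
  let ⟨_, hx⟩ := h
  eq_top_mono (hg le_top) hx

end MonotoneBounds

section Masking

variable {α ι : Type*}

/-- Alice's map on a single row: replace `x` by `⊥` unless `g` accepts it. -/
def eraseRejected [Bot α] (g : α → Bool) (x : α) : α :=
  if g x then x else ⊥

/-- Bob's map on a single row: replace `y` by `⊤` if `g` accepts it. -/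
def fillAccepted [Top α] (g : α → Bool) (y : α) : α :=
  if g y then ⊤ else y

lemma apply_eraseRejected [Bot α] {g : α → Bool} (hg : g ⊥ = false) (x : α) :
    g (eraseRejected g x) = g x := by
  cases hx : g x <;> simp [eraseRejected, hx, hg]

lemma apply_fillAccepted [Top α] {g : α → Bool} (hg : g ⊤ = true) (y : α) :
    g (fillAccepted g y) = g y := by
  cases hy : g y <;> simp [fillAccepted, hy, hg]

lemma eraseRejected_apply_eq_true_iff {g : (ι → Bool) → Bool} {x : ι → Bool} {j : ι} :
    eraseRejected g x j = true ↔ g x = true ∧ x j = true := by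
  cases hx : g x <;> simp [eraseRejected, hx]

lemma fillAccepted_apply_eq_false_iff {g : (ι → Bool) → Bool} {y : ι → Bool} {j : ι} :
    fillAccepted g y j = false ↔ g y = false ∧ y j = false := by
  cases hy : g y <;> simp [fillAccepted, hy]

end Masking

theorem starKW_reduces_to_diamondKW_general {m : ℕ} {ι : Type} (f : (Fin m → Bool) → Bool)
    {g : (ι → Bool) → Bool} (hbot : g ⊥ = false) (htop : g ⊤ = true) :
    Reduces (starKW f g) (diamondKW f g) := by
  refine ⟨fun X => ⟨fun i => eraseRejected g (X.val i), ?_⟩,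
    fun Y => ⟨fun i => fillAccepted g (Y.val i), ?_⟩, id, ?_⟩
  · simpa only [apply_eraseRejected hbot] using X.property
  · simpa only [apply_fillAccepted htop] using Y.property
  · rintro X Y ⟨i, j⟩ ⟨hX, hY⟩
    obtain ⟨ha, hXij⟩ := eraseRejected_apply_eq_true_iff.mp hX
    obtain ⟨hb, hYij⟩ := fillAccepted_apply_eq_false_iff.mp hY
    exact ⟨ha, hb, hXij, hYij⟩

/-- For all non-constant monotone `f`, `g`, the communication
problem `mKW_f ⊛ mKW_g` reduces to `mKW_f ◇ mKW_g`. -/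
theorem starKW_reduces_to_diamondKW (m n : ℕ)
    (f : (Fin m → Bool) → Bool) (g : (Fin n → Bool) → Bool)
    (hf : Monotone f) (hf1 : ∃ x, f x = true) (hf0 : ∃ x, f x = false)
    (hg : Monotone g) (hg1 : ∃ x, g x = true) (hg0 : ∃ x, g x = false) :
    Reduces (starKW f g) (diamondKW f g) :=
  starKW_reduces_to_diamondKW_general f (map_bot_eq_bot_of_monotone hg hg0)
    (map_top_eq_top_of_monotone hg hg1)
end

section
/- Structure theorem: For every η > 0 there exist c ∈ ℕ and κ > 0 such that the following holds. Let f : {0,1}^m → {0,1} be a non-constant monotone function, S ⊆ {0,1}^ℓ × 𝒪 a search problem, and gd : {0,1}^t × {0,1}^t → {0,1} a gadget with disc(gd) ≤ 2^{−η·t} and t ≥ c·log₂(m·ℓ). Fix any protocol Π that solves mKW_f ⊛ (S◇gd). Then for every live transcript π₁ of Π there exists a suffix π₂ of length at least κ·Q(S)·t such that the concatenation π₁∘π₂ is a transcript of Π. -/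
open Classical

/-!
At a live vertex `π₁`, dyadic bucketing of `mL (𝒜_W × ℬ_W)` yields many matrices `W` of comparable
complexity. While some entries of the unrevealed rows are too predictable, fix them and reveal
their rows, making `a` vanish or `b` equal `1` there: the gain in density pays for the loss of
complexity. What remains is a set `V` of matrices, spread on the unrevealed rows, with vectors
`a^W ∈ 𝒜_W` and `b^W ∈ ℬ_W` which do not differ on the revealed rows in the direction asked for.
Restricted to `V`, the subtree at `π₁` therefore solves `S ◇ gd` on a row of its choice among the
unrevealed ones.

Such a protocol is simulated as in lifting theorems. Each side keeps a set of inputs that is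
spread on its free entries; when a bit of communication destroys this, the offending entries are
fixed, and the other side is restricted to make the gadget bits of these entries equal to those of
an adversary fooling shallow decision trees for `S`. This is possible because the parities of the
gadget bits are nearly unbiased on spread sets, by a Gram matrix bound which follows from the
discrepancy. Every fixed entry divides a potential by about `2^(η t / 6)` while every bit of
communication multiplies it by at most `4`, and at a leaf at least `Q(S)` entries are fixed.
-/

noncomputable section
open scoped Finset Matrix

/-! ### Discrepancy and the norm of the sign matrix -/

section SignMatrix

/-- The sign `(-1)^b` of a bit `b`, the character through which gadgets are analysed. -/
def boolSign (b : Bool) : ℝ := if b then -1 else 1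

lemma abs_boolSign (b : Bool) : |boolSign b| = 1 := by cases b <;> simp [boolSign]

lemma boolSign_mul_self (b : Bool) : boolSign b * boolSign b = 1 := by
  cases b <;> simp [boolSign]

lemma boolSign_mul_boolSign_of_ne {a b : Bool} (h : a ≠ b) :
    boolSign a * boolSign b = -1 := by
  revert h; cases a <;> cases b <;> simp [boolSign]

/-- The `±1` matrix of a gadget. -/
def signMatrix {α β : Type*} (gd : α → β → Bool) : Matrix α β ℝ :=
  Matrix.of fun u v => boolSign (gd u v)

lemma sum_signMatrix {α β : Type*} (gd : α → β → Bool) (A : Finset α) (B : Finset β) :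
    ∑ u ∈ A, ∑ v ∈ B, signMatrix gd u v =
      (#{uv ∈ A ×ˢ B | gd uv.1 uv.2 = false} : ℝ) - #{uv ∈ A ×ˢ B | gd uv.1 uv.2 = true} := by
  simp only [signMatrix, Matrix.of_apply]
  rw [← Finset.sum_product', Finset.card_filter, Finset.card_filter]
  push_cast
  rw [← Finset.sum_sub_distrib]
  refine Finset.sum_congr rfl fun x _ => ?_
  cases gd x.1 x.2 <;> simp [boolSign]

lemma abs_sum_signMatrix_le_card {α β : Type*} (gd : α → β → Bool) (A : Finset α)
    (B : Finset β) : |∑ u ∈ A, ∑ v ∈ B, signMatrix gd u v| ≤ (#A : ℝ) * #B := by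
  calc |∑ u ∈ A, ∑ v ∈ B, signMatrix gd u v|
      ≤ ∑ u ∈ A, ∑ v ∈ B, |signMatrix gd u v| :=
        (Finset.abs_sum_le_sum_abs _ _).trans
          (Finset.sum_le_sum fun _ _ => Finset.abs_sum_le_sum_abs _ _)
    _ = (#A : ℝ) * #B := by simp [signMatrix, abs_boolSign]

lemma abs_sum_signMatrix_le_disc {t : ℕ} (gd : (Fin t → Bool) → (Fin t → Bool) → Bool)
    (A B : Finset (Fin t → Bool)) :
    |∑ u ∈ A, ∑ v ∈ B, signMatrix gd u v| ≤ disc gd * (2 ^ t * 2 ^ t) := by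
  have card_le : ∀ C : Finset (Fin t → Bool), (#C : ℝ) ≤ 2 ^ t := fun C => by
    simpa using Nat.cast_le (α := ℝ).2 (Finset.card_le_univ C)
  rw [← div_le_iff₀ (by positivity)]
  refine le_csSup ⟨1, ?_⟩ ⟨A, B, by rw [sum_signMatrix]⟩
  rintro _ ⟨A', B', rfl⟩
  rw [div_le_one (by positivity), ← sum_signMatrix]
  exact (abs_sum_signMatrix_le_card gd A' B').trans
    (mul_le_mul (card_le A') (card_le B') (by positivity) (by positivity))

end SignMatrix

section GramNorm
variable {α β κ : Type*} [Fintype α] [Fintype β]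

/-- The Frobenius norm of the Gram matrix `Mᵀ M`, that is, the square of the Schatten `4`-norm
of `M`. It dominates the square of the operator norm and, unlike the latter, is multiplicative
under tensor powers by a mere rearrangement of sums. -/
def gramNorm (M : Matrix α β ℝ) : ℝ := √(∑ v, ∑ v', (Mᵀ * M) v v' ^ 2)

lemma gramNorm_nonneg (M : Matrix α β ℝ) : 0 ≤ gramNorm M := Real.sqrt_nonneg _

lemma sum_sq_gram_eq_trace (M : Matrix α β ℝ) :
    ∑ v, ∑ v', (Mᵀ * M) v v' ^ 2 = Matrix.trace (Mᵀ * M * (Mᵀ * M)) := by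
  have symm : (Mᵀ * M)ᵀ = Mᵀ * M := by simp
  refine Finset.sum_congr rfl fun v _ => ?_
  rw [Matrix.diag_apply, Matrix.mul_apply]
  refine Finset.sum_congr rfl fun v' _ => ?_
  rw [sq]
  exact congrArg (_ * ·) (congrFun (congrFun symm v') v)

lemma gramNorm_transpose (M : Matrix α β ℝ) : gramNorm Mᵀ = gramNorm M := by
  rw [gramNorm, gramNorm, sum_sq_gram_eq_trace, sum_sq_gram_eq_trace, Matrix.transpose_transpose,
    Matrix.mul_assoc, Matrix.trace_mul_comm, Matrix.mul_assoc, Matrix.mul_assoc, Matrix.mul_assoc]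

lemma prod_sum_sum_eq_sum_sum_prod [Fintype κ] [DecidableEq κ] (g : α → β → ℝ) :
    (∑ u, ∑ v, g u v) ^ Fintype.card κ = ∑ u : κ → α, ∑ v : κ → β, ∏ j, g (u j) (v j) := by
  rw [← Finset.card_univ, ← Finset.prod_const, Finset.prod_univ_sum, Fintype.piFinset_univ]
  simp only [Finset.prod_univ_sum, Fintype.piFinset_univ]

lemma sum_sq_eq_sum_sum_gram [Fintype κ] [DecidableEq κ] (M : Matrix α β ℝ) (q : (κ → β) → ℝ) :
    ∑ u : κ → α, (∑ v : κ → β, (∏ j, M (u j) (v j)) * q v) ^ 2 =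
      ∑ v, ∑ v', q v * q v' * ∏ j, (Mᵀ * M) (v j) (v' j) := by
  have gram : ∀ v v' : κ → β, ∏ j, (Mᵀ * M) (v j) (v' j) =
      ∑ u : κ → α, (∏ j, M (u j) (v j)) * ∏ j, M (u j) (v' j) := fun v v' => by
    simp only [Matrix.mul_apply, Matrix.transpose_apply, Finset.prod_univ_sum,
      Fintype.piFinset_univ, Finset.prod_mul_distrib]
  simp only [sq, Finset.sum_mul_sum]
  simp only [gram, Finset.mul_sum]
  rw [Finset.sum_comm]
  refine Finset.sum_congr rfl fun v _ => ?_
  rw [Finset.sum_comm]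
  exact Finset.sum_congr rfl fun v' _ => Finset.sum_congr rfl fun u _ => by ring

lemma sum_sq_tensor_le [Fintype κ] [DecidableEq κ] (M : Matrix α β ℝ) (q : (κ → β) → ℝ) :
    ∑ u : κ → α, (∑ v : κ → β, (∏ j, M (u j) (v j)) * q v) ^ 2 ≤
      gramNorm M ^ Fintype.card κ * ∑ v, q v ^ 2 := by
  set G := Mᵀ * M
  have sum_sq_q : √(∑ vv : (κ → β) × (κ → β), (q vv.1 * q vv.2) ^ 2) = ∑ v, q v ^ 2 := by
    simp only [Fintype.sum_prod_type, mul_pow, ← Finset.sum_mul_sum, ← sq]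
    exact Real.sqrt_sq (by positivity)
  have sum_sq_gram : √(∑ vv : (κ → β) × (κ → β), (∏ j, G (vv.1 j) (vv.2 j)) ^ 2) =
      gramNorm M ^ Fintype.card κ := by
    rw [Fintype.sum_prod_type]
    simp only [← Finset.prod_pow]
    rw [← prod_sum_sum_eq_sum_sum_prod fun a b => G a b ^ 2, gramNorm, Real.sqrt_eq_rpow,
      Real.sqrt_eq_rpow, ← Real.rpow_natCast, ← Real.rpow_natCast, ← Real.rpow_mul (by positivity),
      ← Real.rpow_mul (by positivity), mul_comm]
  rw [sum_sq_eq_sum_sum_gram, ← Fintype.sum_prod_type']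
  calc ∑ vv : (κ → β) × (κ → β), q vv.1 * q vv.2 * ∏ j, G (vv.1 j) (vv.2 j)
      ≤ _ := Real.sum_mul_le_sqrt_mul_sqrt _ _ _
    _ = gramNorm M ^ Fintype.card κ * ∑ v, q v ^ 2 := by rw [sum_sq_q, sum_sq_gram, mul_comm]

lemma sum_mul_boolSign (f : α → ℝ) (a : α → Bool) :
    ∑ u, f u * boolSign (a u) = ∑ u with a u = false, f u - ∑ u with a u = true, f u := by
  rw [Finset.sum_filter, Finset.sum_filter, ← Finset.sum_sub_distrib]
  refine Finset.sum_congr rfl fun u _ => ?_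
  cases a u <;> simp [boolSign]

lemma abs_sum_mul_boolSign_le {M : Matrix α β ℝ} {E : ℝ}
    (hM : ∀ (A : Finset α) (B : Finset β), |∑ u ∈ A, ∑ v ∈ B, M u v| ≤ E)
    (a : α → Bool) (b : β → Bool) :
    |∑ u, ∑ v, M u v * boolSign (a u) * boolSign (b v)| ≤ 4 * E := by
  have expand : ∑ u, ∑ v, M u v * boolSign (a u) * boolSign (b v) =
      (∑ u with a u = false, ∑ v with b v = false, M u v -
        ∑ u with a u = false, ∑ v with b v = true, M u v) -
      (∑ u with a u = true, ∑ v with b v = false, M u v -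
        ∑ u with a u = true, ∑ v with b v = true, M u v) := by
    rw [← Finset.sum_sub_distrib, ← Finset.sum_sub_distrib, ← sum_mul_boolSign]
    refine Finset.sum_congr rfl fun u _ => ?_
    rw [← sum_mul_boolSign, Finset.sum_mul]
    exact Finset.sum_congr rfl fun v _ => by ring
  have bound := fun i j => abs_le.1 (hM {u | a u = i} {v | b v = j})
  rw [expand, abs_le]
  constructor <;>
    linarith [bound false false, bound false true, bound true false, bound true true]

lemma gramNorm_signMatrix_le {gd : α → β → Bool} {E : ℝ}
    (hE : ∀ (A : Finset α) (B : Finset β), |∑ u ∈ A, ∑ v ∈ B, signMatrix gd u v| ≤ E) :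
    gramNorm (signMatrix gd) ≤ √(Fintype.card α * Fintype.card β * (4 * E)) := by
  set M := signMatrix gd with hM
  refine Real.sqrt_le_sqrt ?_
  calc ∑ v, ∑ v', (Mᵀ * M) v v' ^ 2
      = ∑ v', ∑ u', ∑ u, ∑ v, M u v * M u v' * M u' v * M u' v' := by
        rw [Finset.sum_comm]
        refine Finset.sum_congr rfl fun v' _ => ?_
        simp only [Matrix.mul_apply, Matrix.transpose_apply, sq, Finset.sum_mul_sum]
        rw [Finset.sum_congr rfl fun v _ => Finset.sum_comm, Finset.sum_comm]
        refine Finset.sum_congr rfl fun u' _ => ?_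
        rw [Finset.sum_comm]
        exact Finset.sum_congr rfl fun u _ => Finset.sum_congr rfl fun v _ => by ring
    _ ≤ ∑ _v' : β, ∑ _u' : α, 4 * E := by
        refine Finset.sum_le_sum fun v' _ => Finset.sum_le_sum fun u' _ => ?_
        simp only [← Finset.sum_mul]
        refine (le_abs_self _).trans ?_
        rw [abs_mul, hM, signMatrix, Matrix.of_apply, abs_boolSign, mul_one]
        exact abs_sum_mul_boolSign_le hE (fun u => gd u v') (fun v => gd u' v)
    _ = Fintype.card α * Fintype.card β * (4 * E) := by
        simp only [Finset.sum_const, Finset.card_univ, nsmul_eq_mul]; ring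

end GramNorm

/-! ### Spread sets and character sums -/

section Spread
variable {N Λ : Type*}

/-- The points of `B` whose restriction to the coordinates in `J` is `w`. -/
def fiber (B : Finset (N → Λ)) (J : Finset N) (w : J → Λ) : Finset (N → Λ) :=
  {b ∈ B | J.restrict b = w}

lemma mem_fiber {B : Finset (N → Λ)} {J : Finset N} {w : J → Λ} {b : N → Λ} :
    b ∈ fiber B J w ↔ b ∈ B ∧ J.restrict b = w := Finset.mem_filter

lemma restrict_eq_restrict_iff {J : Finset N} {b y : N → Λ} :
    J.restrict b = J.restrict y ↔ ∀ j ∈ J, b j = y j := by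
  simp [funext_iff]

lemma fiber_subset (B : Finset (N → Λ)) (J : Finset N) (w : J → Λ) : fiber B J w ⊆ B :=
  Finset.filter_subset _ _

lemma fiber_mono {B B' : Finset (N → Λ)} (h : B ⊆ B') (J : Finset N) (w : J → Λ) :
    fiber B J w ⊆ fiber B' J w := Finset.filter_subset_filter _ h

lemma fiber_empty (B : Finset (N → Λ)) (w : (∅ : Finset N) → Λ) : fiber B ∅ w = B :=
  Finset.filter_true_of_mem fun _ _ => Subsingleton.elim _ _

lemma fiber_fiber [DecidableEq N] (B : Finset (N → Λ)) (J K : Finset N) (y : N → Λ) :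
    fiber (fiber B J (J.restrict y)) K (K.restrict y) =
      fiber B (J ∪ K) ((J ∪ K).restrict y) := by
  ext b
  simp only [mem_fiber, restrict_eq_restrict_iff, Finset.mem_union, or_imp, forall_and, and_assoc]

/-- `B` is spread on `F` when fixing any `j` coordinates in `F` keeps at most a `D ^ j` fraction
of the points of `B`. This is a min-entropy condition: for `D = 1 / |Λ|` it says that the
projection of `B` to `F` is uniform. -/
def IsSpread (D : ℝ) (F : Finset N) (B : Finset (N → Λ)) : Prop :=
  ∀ J ⊆ F, ∀ w, (#(fiber B J w) : ℝ) ≤ D ^ #J * #B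

lemma IsSpread.weaken {D D' : ℝ} {F : Finset N} {B : Finset (N → Λ)} (h : IsSpread D F B)
    (hD : 0 ≤ D) (hD' : D ≤ D') : IsSpread D' F B :=
  fun J hJ w => (h J hJ w).trans (by gcongr)

lemma isSpread_of_forall_mem {D : ℝ} (hD : 0 ≤ D) {F : Finset N} {B : Finset (N → Λ)}
    (h : ∀ J ⊆ F, J.Nonempty → ∀ y ∈ B, (#(fiber B J (J.restrict y)) : ℝ) ≤ D ^ #J * #B) :
    IsSpread D F B := by
  intro J hJ w
  obtain hw | ⟨y, hy⟩ := (fiber B J w).eq_empty_or_nonempty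
  · rw [hw, Finset.card_empty, Nat.cast_zero]
    positivity
  obtain rfl | hJne := J.eq_empty_or_nonempty
  · simp [fiber_empty]
  obtain ⟨hyB, rfl⟩ := mem_fiber.1 hy
  exact h J hJ hJne y hyB

lemma IsSpread.subset {D c : ℝ} (hD : 0 ≤ D) (hc : 1 ≤ c) {F : Finset N} {B B' : Finset (N → Λ)}
    (h : IsSpread D F B) (hsub : B' ⊆ B) (hcard : (#B : ℝ) ≤ c * #B') :
    IsSpread (c * D) F B' := by
  refine isSpread_of_forall_mem (by positivity) fun J hJ hJne y _ => ?_
  calc (#(fiber B' J (J.restrict y)) : ℝ) ≤ #(fiber B J (J.restrict y)) := by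
        exact_mod_cast Finset.card_le_card (fiber_mono hsub _ _)
    _ ≤ D ^ #J * (c * #B') := (h J hJ _).trans (by gcongr)
    _ ≤ D ^ #J * (c ^ #J * #B') := by
        gcongr
        exact le_self_pow₀ hc hJne.card_ne_zero
    _ = (c * D) ^ #J * #B' := by ring

lemma IsSpread.card_fiber_fiber_le {D : ℝ} (hD : 0 ≤ D) {F : Finset N}
    {B : Finset (N → Λ)} (hB : IsSpread D F B) {J K : Finset N} (hJ : J ⊆ F) (hK : K ⊆ F)
    (hJK : Disjoint J K) (w : J → Λ) (v : K → Λ) :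
    (#(fiber (fiber B J w) K v) : ℝ) ≤ D ^ (#J + #K) * #B := by
  obtain h | ⟨y, hy⟩ := (fiber (fiber B J w) K v).eq_empty_or_nonempty
  · rw [h, Finset.card_empty, Nat.cast_zero]
    positivity
  obtain ⟨hyJ, rfl⟩ := mem_fiber.1 hy
  obtain ⟨-, rfl⟩ := mem_fiber.1 hyJ
  rw [fiber_fiber, ← Finset.card_union_of_disjoint hJK]
  exact hB _ (Finset.union_subset hJ hK) _

lemma exists_isSpread_fiber [DecidableEq N] {D : ℝ} (hD : 0 < D) (F : Finset N) {A : Finset (N → Λ)}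
    (hA : A.Nonempty) :
    ∃ I ⊆ F, ∃ x ∈ A, D ^ #I * #A ≤ #(fiber A I (I.restrict x)) ∧
      IsSpread D (F \ I) (fiber A I (I.restrict x)) := by
  let IsHeavy (I : Finset N) : Prop :=
    ∃ x ∈ A, D ^ #I * #A ≤ (#(fiber A I (I.restrict x)) : ℝ)
  have heavy_empty : IsHeavy ∅ := hA.imp fun x hx => ⟨hx, by simp [fiber_empty]⟩
  obtain ⟨I, hI, hmax⟩ := Finset.exists_max_image {I ∈ F.powerset | IsHeavy I} Finset.card
    ⟨∅, Finset.mem_filter.2 ⟨Finset.empty_mem_powerset _, heavy_empty⟩⟩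
  obtain ⟨hIF, x, hx, hheavy⟩ := Finset.mem_filter.1 hI
  refine ⟨I, Finset.mem_powerset.1 hIF, x, hx, hheavy,
    isSpread_of_forall_mem hD.le fun J hJ hJne y hy => ?_⟩
  obtain ⟨hyA, hyI⟩ := mem_fiber.1 hy
  by_contra! hlt
  have hIJ : Disjoint I J := (Finset.disjoint_of_subset_left hJ Finset.sdiff_disjoint).symm
  have heavy_union : IsHeavy (I ∪ J) := by
    refine ⟨y, hyA, ?_⟩
    rw [← fiber_fiber, hyI, Finset.card_union_of_disjoint hIJ]
    calc D ^ (#I + #J) * (#A : ℝ) = D ^ #J * (D ^ #I * #A) := by ring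
      _ ≤ D ^ #J * #(fiber A I (I.restrict x)) := by gcongr
      _ ≤ _ := hlt.le
  have := hmax (I ∪ J) (Finset.mem_filter.2 ⟨Finset.mem_powerset.2
    (Finset.union_subset (Finset.mem_powerset.1 hIF) (hJ.trans Finset.sdiff_subset)), heavy_union⟩)
  rw [Finset.card_union_of_disjoint hIJ] at this
  have := hJne.card_pos
  omega

/-- The character `∏_{j ∈ K} (-1)^{gd(x_j, y_j)}`: the parity over `K` of the
gadget values, as a sign. -/
def character (gd : Λ → Λ → Bool) (K : Finset N) (x y : N → Λ) : ℝ :=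
  ∏ j ∈ K, boolSign (gd (x j) (y j))

lemma abs_character (gd : Λ → Λ → Bool) (K : Finset N) (x y : N → Λ) :
    |character gd K x y| = 1 := by
  simp [character, Finset.abs_prod, abs_boolSign]

lemma character_empty (gd : Λ → Λ → Bool) (x y : N → Λ) : character gd ∅ x y = 1 := rfl

lemma character_eq_prod_signMatrix (gd : Λ → Λ → Bool) (K : Finset N) (x y : N → Λ) :
    character gd K x y = ∏ j : K, signMatrix gd (K.restrict x j) (K.restrict y j) :=
  (Finset.prod_coe_sort K fun j => boolSign (gd (x j) (y j))).symm

lemma sum_comp_eq_sum_card_fiber [Fintype Λ] [DecidableEq N] (B : Finset (N → Λ)) (K : Finset N)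
    (g : (K → Λ) → ℝ) : ∑ b ∈ B, g (K.restrict b) = ∑ v, (#(fiber B K v) : ℝ) * g v := by
  rw [← Finset.sum_fiberwise B K.restrict]
  refine Finset.sum_congr rfl fun v _ => ?_
  rw [Finset.sum_congr rfl fun b hb => congrArg g (Finset.mem_filter.1 hb).2]
  simp [fiber]

lemma sum_character_eq [Fintype Λ] [DecidableEq N] (gd : Λ → Λ → Bool) (K : Finset N)
    (B : Finset (N → Λ)) (x : N → Λ) :
    ∑ b ∈ B, character gd K x b =
      ∑ v : K → Λ, (∏ j, signMatrix gd (K.restrict x j) (v j)) * #(fiber B K v) := by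
  simp only [character_eq_prod_signMatrix]
  rw [sum_comp_eq_sum_card_fiber B K fun v => ∏ j, signMatrix gd (K.restrict x j) (v j)]
  exact Finset.sum_congr rfl fun v _ => mul_comm _ _

lemma sum_sq_card_fiber_fiber_le [Fintype Λ] [DecidableEq N] {D : ℝ} (hD : 0 ≤ D)
    {F : Finset N} {B : Finset (N → Λ)} (hB : IsSpread D F B) {J K : Finset N} (hJ : J ⊆ F)
    (hK : K ⊆ F) (hJK : Disjoint J K) (w : J → Λ) :
    ∑ v : K → Λ, (#(fiber (fiber B J w) K v) : ℝ) ^ 2 ≤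
      (D ^ (#J + #K) * #B) * (D ^ #J * #B) := by
  calc ∑ v : K → Λ, (#(fiber (fiber B J w) K v) : ℝ) ^ 2
      ≤ ∑ v : K → Λ, #(fiber (fiber B J w) K v) * (D ^ (#J + #K) * #B) := by
        refine Finset.sum_le_sum fun v _ => ?_
        rw [sq]
        gcongr
        exact hB.card_fiber_fiber_le hD hJ hK hJK w v
    _ = (D ^ (#J + #K) * #B) * #(fiber B J w) := by
        rw [← sum_comp_eq_sum_card_fiber _ K fun _ => D ^ (#J + #K) * (#B : ℝ)]
        simp [mul_comm]
    _ ≤ (D ^ (#J + #K) * #B) * (D ^ #J * #B) := by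
        gcongr
        exact hB J hJ w

lemma sum_sq_sum_character_le [Fintype Λ] (gd : Λ → Λ → Bool) {D D' : ℝ}
    (hD : 0 ≤ D) (hD' : 0 ≤ D') {F : Finset N} {A B : Finset (N → Λ)} (hA : IsSpread D' F A)
    (hB : IsSpread D F B) {J K : Finset N} (hJ : J ⊆ F) (hK : K ⊆ F) (hJK : Disjoint J K)
    (w : J → Λ) :
    ∑ x ∈ A, (∑ b ∈ fiber B J w, character gd K x b) ^ 2 ≤
      (D' ^ #K * #A) *
        (gramNorm (signMatrix gd) ^ #K * ((D ^ (#J + #K) * #B) * (D ^ #J * #B))) := by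
  simp only [sum_character_eq]
  set q : (K → Λ) → ℝ := fun v => #(fiber (fiber B J w) K v)
  set T : (K → Λ) → ℝ := fun u => ∑ v, (∏ j, signMatrix gd (u j) (v j)) * q v
  calc ∑ x ∈ A, T (K.restrict x) ^ 2
      = ∑ u, (#(fiber A K u) : ℝ) * T u ^ 2 := sum_comp_eq_sum_card_fiber A K fun u => T u ^ 2
    _ ≤ ∑ u, D' ^ #K * #A * T u ^ 2 :=
        Finset.sum_le_sum fun u _ => by gcongr; exact hA K hK u
    _ = (D' ^ #K * #A) * ∑ u, T u ^ 2 := by rw [Finset.mul_sum]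
    _ ≤ (D' ^ #K * #A) * (gramNorm (signMatrix gd) ^ #K * ∑ v, q v ^ 2) := by
        gcongr
        simpa only [Fintype.card_coe] using sum_sq_tensor_le (signMatrix gd) q
    _ ≤ _ := by
        have := gramNorm_nonneg (signMatrix gd)
        gcongr
        exact sum_sq_card_fiber_fiber_le hD hB hJ hK hJK w

end Spread

/-! ### Pseudorandom points -/

section Pseudorandom
variable {N Λ : Type*}

lemma sum_powerset_one_div_pow_le {r : ℝ} (hr : 0 < r) {I : Finset N} (hI : 4 * #I ≤ r) :
    ∑ K ∈ I.powerset, (1 / r) ^ #K ≤ 4 / 3 := by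
  have exp_quarter : Real.exp (1 / 4) ≤ 4 / 3 := by
    refine (Real.exp_bound_div_one_sub_of_interval (by norm_num) (by norm_num)).trans_eq ?_
    norm_num
  calc ∑ K ∈ I.powerset, (1 / r) ^ #K = (1 + 1 / r) ^ #I := by
        rw [← Finset.prod_const, Finset.prod_one_add]
        simp only [Finset.prod_const]
    _ ≤ Real.exp (1 / r) ^ #I := by
        gcongr
        linarith [Real.add_one_le_exp (1 / r)]
    _ = Real.exp (#I / r) := by rw [← Real.exp_nat_mul]; ring_nf
    _ ≤ Real.exp (1 / 4) := by
        refine Real.exp_le_exp.2 ?_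
        rw [div_le_div_iff₀ hr (by norm_num)]
        linarith
    _ ≤ 4 / 3 := exp_quarter

lemma sum_powerset_erase_empty_le [DecidableEq N] {r : ℝ} (hr : 0 < r) {I : Finset N}
    (hI : 4 * #I ≤ r) :
    ∑ K ∈ I.powerset.erase ∅, (1 / r) ^ #K ≤ 1 / 3 := by
  have total := sum_powerset_one_div_pow_le hr hI
  rw [← Finset.add_sum_erase _ _ (Finset.empty_mem_powerset _), Finset.card_empty, pow_zero]
    at total
  linarith

/-- `x` is pseudorandom for `B` on `F` when all character sums of `x` against the fibers of `B`
are small compared with the largest size `D ^ #J * #B` of a fiber. The factor `r ^ (k * #J)`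
makes the condition void unless `k * #J < #K`, so that a union bound over the `|Λ| ^ #J` fibers
is affordable. -/
def IsPseudorandom (gd : Λ → Λ → Bool) (r : ℝ) (k : ℕ) (D : ℝ) (F : Finset N)
    (B : Finset (N → Λ)) (x : N → Λ) : Prop :=
  ∀ J ⊆ F, ∀ K ⊆ F, Disjoint J K → ∀ w : J → Λ,
    |∑ b ∈ fiber B J w, character gd K x b| ≤
      r ^ (k * #J) * (1 / r) ^ #K * (D ^ #J * #B)

lemma abs_sum_character_le_card (gd : Λ → Λ → Bool) (K : Finset N) (B : Finset (N → Λ))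
    (x : N → Λ) : |∑ b ∈ B, character gd K x b| ≤ #B := by
  refine (Finset.abs_sum_le_sum_abs _ _).trans ?_
  simp [abs_character]

/-- The points of `A` violating pseudorandomness for the given `J` and `K`, with the threshold
relevant in the only range `k * #J < #K` where a violation is possible. -/
def irregularPoints (gd : Λ → Λ → Bool) (r D : ℝ) (A B : Finset (N → Λ)) (J K : Finset N) :
    Finset (N → Λ) :=
  {x ∈ A | ∃ w : J → Λ,
    (1 / r) ^ #K * (D ^ #J * #B) < |∑ b ∈ fiber B J w, character gd K x b|}

lemma mem_irregularPoints {gd : Λ → Λ → Bool} {r D : ℝ} {A B : Finset (N → Λ)}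
    {J K : Finset N} {x : N → Λ} :
    x ∈ irregularPoints gd r D A B J K ↔ x ∈ A ∧ ∃ w : J → Λ,
      (1 / r) ^ #K * (D ^ #J * #B) < |∑ b ∈ fiber B J w, character gd K x b| := by
  unfold irregularPoints
  exact Finset.mem_filter

lemma exists_irregular_of_not_isPseudorandom {gd : Λ → Λ → Bool} {r : ℝ} (hr : 1 ≤ r) {k : ℕ}
    {D : ℝ} (hD : 0 ≤ D) {F : Finset N} {A B : Finset (N → Λ)} (hB : IsSpread D F B) {x : N → Λ}
    (hxA : x ∈ A) (hx : ¬ IsPseudorandom gd r k D F B x) :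
    ∃ J ⊆ F, ∃ K ⊆ F, k * #J < #K ∧ Disjoint J K ∧ x ∈ irregularPoints gd r D A B J K := by
  simp only [IsPseudorandom] at hx
  push Not at hx
  obtain ⟨J, hJ, K, hK, hJK, w, hlt⟩ := hx
  have : 0 < r := by linarith
  refine ⟨J, hJ, K, hK, ?_, hJK, mem_irregularPoints.2 ⟨hxA, w, lt_of_le_of_lt ?_ hlt⟩⟩
  · by_contra! hle
    refine absurd hlt (not_lt.2 ?_)
    refine ((abs_sum_character_le_card gd K _ x).trans (hB J hJ w)).trans
      (le_mul_of_one_le_left (by positivity) ?_)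
    rw [one_div, inv_pow, ← div_eq_mul_inv, one_le_div (by positivity)]
    exact pow_le_pow_right₀ hr hle
  · gcongr
    exact le_mul_of_one_le_left (by positivity) (one_le_pow₀ hr)

lemma card_lt_abs_mul_sq_le {X : Type*} (A : Finset X) (f : X → ℝ) {θ : ℝ} (hθ : 0 ≤ θ) :
    #{x ∈ A | θ < |f x|} * θ ^ 2 ≤ ∑ x ∈ A, f x ^ 2 := by
  calc #{x ∈ A | θ < |f x|} * θ ^ 2 = ∑ x ∈ A with θ < |f x|, θ ^ 2 := by
        rw [Finset.sum_const, nsmul_eq_mul]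
    _ ≤ ∑ x ∈ A with θ < |f x|, f x ^ 2 := Finset.sum_le_sum fun x hx => by
        rw [← sq_abs (f x)]
        exact pow_le_pow_left₀ hθ (Finset.mem_filter.1 hx).2.le 2
    _ ≤ ∑ x ∈ A, f x ^ 2 :=
        Finset.sum_le_sum_of_subset_of_nonneg (Finset.filter_subset _ _) fun _ _ _ => sq_nonneg _

variable [Fintype Λ]

lemma card_large_character_sum_le (gd : Λ → Λ → Bool) {r : ℝ} (hr : 0 < r) {D w : ℝ} (hD : 0 < D)
    (hw : 0 ≤ w) {F : Finset N} {A B : Finset (N → Λ)} (hBne : B.Nonempty)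
    (hA : IsSpread (w * D) F A) (hB : IsSpread D F B) {J K : Finset N} (hJ : J ⊆ F) (hK : K ⊆ F)
    (hJK : Disjoint J K) (v : J → Λ) :
    (#{x ∈ A | (1 / r) ^ #K * (D ^ #J * #B) < |∑ b ∈ fiber B J v, character gd K x b|} : ℝ) ≤
      (w * gramNorm (signMatrix gd) * D ^ 2 * r ^ 2) ^ #K * #A := by
  have : (0 : ℝ) < #B := by exact_mod_cast hBne.card_pos
  set θ : ℝ := (1 / r) ^ #K * (D ^ #J * #B) with hθ
  have hθ0 : 0 < θ := by positivity
  refine le_of_mul_le_mul_right ?_ (pow_pos hθ0 2)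
  refine (card_lt_abs_mul_sq_le A _ hθ0.le).trans
    ((sum_sq_sum_character_le gd hD.le (by positivity) hA hB hJ hK hJK v).trans_eq ?_)
  have cancel : (r ^ #K) ^ 2 * ((1 / r) ^ #K) ^ 2 = 1 := by
    rw [← mul_pow, ← mul_pow, mul_one_div_cancel hr.ne', one_pow, one_pow]
  simp only [hθ, mul_pow, pow_add]
  linear_combination (-(w ^ #K * D ^ #K * #A * gramNorm (signMatrix gd) ^ #K *
    (D ^ #J * D ^ #K * #B) * (D ^ #J * #B))) * cancel

lemma card_irregularPoints_le (gd : Λ → Λ → Bool) {r : ℝ} (hr : 0 < r) {k : ℕ} {D w τ : ℝ}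
    (hD : 0 < D) (hw : 0 ≤ w) (hτ : 1 ≤ τ) (hΛ : Fintype.card Λ ≤ τ ^ k) {F : Finset N}
    {A B : Finset (N → Λ)} (hBne : B.Nonempty) (hA : IsSpread (w * D) F A) (hB : IsSpread D F B)
    {J K : Finset N} (hJ : J ⊆ F) (hK : K ⊆ F) (hJK : Disjoint J K) (hlt : k * #J < #K) :
    (#(irregularPoints gd r D A B J K) : ℝ) ≤
      (τ * (w * gramNorm (signMatrix gd) * D ^ 2 * r ^ 2)) ^ #K * #A := by
  set P := w * gramNorm (signMatrix gd) * D ^ 2 * r ^ 2 with hP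
  have hP0 : 0 ≤ P := by have := gramNorm_nonneg (signMatrix gd); positivity
  have cover : irregularPoints gd r D A B J K ⊆ Finset.univ.biUnion fun v : J → Λ =>
      {x ∈ A | (1 / r) ^ #K * (D ^ #J * #B) < |∑ b ∈ fiber B J v, character gd K x b|} := by
    intro x hx
    obtain ⟨hxA, v, hv⟩ := mem_irregularPoints.1 hx
    exact Finset.mem_biUnion.2 ⟨v, Finset.mem_univ _, Finset.mem_filter.2 ⟨hxA, hv⟩⟩
  calc (#(irregularPoints gd r D A B J K) : ℝ)
      ≤ ∑ v : J → Λ, (#{x ∈ A | (1 / r) ^ #K * (D ^ #J * #B) <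
          |∑ b ∈ fiber B J v, character gd K x b|} : ℝ) := by
        exact_mod_cast (Finset.card_le_card cover).trans Finset.card_biUnion_le
    _ ≤ ∑ _v : J → Λ, P ^ #K * #A := Finset.sum_le_sum fun v _ =>
        card_large_character_sum_le gd hr hD hw hBne hA hB hJ hK hJK v
    _ = (Fintype.card Λ : ℝ) ^ #J * (P ^ #K * #A) := by simp
    _ ≤ (τ ^ k) ^ #J * (P ^ #K * #A) := by gcongr
    _ ≤ τ ^ #K * (P ^ #K * #A) := by
        rw [← pow_mul]
        gcongr
    _ = (τ * P) ^ #K * #A := by rw [mul_pow τ, mul_assoc]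

lemma pow_le_one_div_pow_mul {r τ w c D : ℝ} (hr : 1 ≤ r) (hc : 0 ≤ c) (hτ : 1 ≤ τ) (hw : 0 ≤ w)
    {k : ℕ} (hk : 1 ≤ k) (hnorm : τ * w * c * D ^ 2 * r ^ 4 ≤ 1) {a b : ℕ} (hlt : k * a < b) :
    (τ * (w * c * D ^ 2 * r ^ 2)) ^ b ≤ (1 / r) ^ a * (1 / r) ^ b := by
  have hr0 : 0 < r := by linarith
  have hle : τ * (w * c * D ^ 2 * r ^ 2) ≤ 1 / r * (1 / r) := by
    rw [one_div_mul_one_div, le_div_iff₀ (by positivity)]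
    linarith
  calc (τ * (w * c * D ^ 2 * r ^ 2)) ^ b ≤ (1 / r * (1 / r)) ^ b := by gcongr
    _ = (1 / r) ^ b * (1 / r) ^ b := mul_pow _ _ _
    _ ≤ (1 / r) ^ a * (1 / r) ^ b := by
      gcongr ?_ * _
      exact pow_le_pow_of_le_one (by positivity) ((div_le_one hr0).2 hr) (by nlinarith)

lemma sum_sum_powerset_le {r : ℝ} (hr : 0 < r) {F : Finset N} (hF : 4 * #F ≤ r) :
    ∑ JK ∈ F.powerset ×ˢ F.powerset.erase ∅, (1 / r) ^ #JK.1 * (1 / r) ^ #JK.2 ≤ 1 / 2 := by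
  simp only [Finset.sum_product, ← Finset.sum_mul_sum]
  calc (∑ J ∈ F.powerset, (1 / r) ^ #J) * ∑ K ∈ F.powerset.erase ∅, (1 / r) ^ #K
      ≤ (4 / 3) * (1 / 3) := by
        gcongr
        · exact sum_powerset_one_div_pow_le hr hF
        · exact sum_powerset_erase_empty_le hr hF
    _ ≤ 1 / 2 := by norm_num

lemma two_mul_card_not_isPseudorandom_le (gd : Λ → Λ → Bool) {r : ℝ} (hr : 1 ≤ r) {k : ℕ}
    (hk : 1 ≤ k) {D w τ : ℝ} (hD : 0 < D) (hw : 0 ≤ w) (hτ : 1 ≤ τ) (hΛ : Fintype.card Λ ≤ τ ^ k)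
    (hnorm : τ * w * gramNorm (signMatrix gd) * D ^ 2 * r ^ 4 ≤ 1) {F : Finset N}
    (hF : 4 * #F ≤ r) {A B : Finset (N → Λ)} (hBne : B.Nonempty) (hA : IsSpread (w * D) F A)
    (hB : IsSpread D F B) :
    2 * (#{x ∈ A | ¬ IsPseudorandom gd r k D F B x} : ℝ) ≤ #A := by
  have hr0 : 0 < r := by linarith
  set T := {JK ∈ F.powerset ×ˢ F.powerset.erase ∅ | Disjoint JK.1 JK.2 ∧ k * #JK.1 < #JK.2}
  have cover : {x ∈ A | ¬ IsPseudorandom gd r k D F B x} ⊆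
      T.biUnion fun JK => irregularPoints gd r D A B JK.1 JK.2 := by
    intro x hx
    obtain ⟨hxA, hx⟩ := Finset.mem_filter.1 hx
    obtain ⟨J, hJ, K, hK, hlt, hJK, hmem⟩ :=
      exists_irregular_of_not_isPseudorandom hr hD.le hB hxA hx
    have hKne : K ≠ ∅ := by rintro rfl; simp at hlt
    exact Finset.mem_biUnion.2 ⟨(J, K), by simp [T, hJ, hK, hJK, hlt, hKne], hmem⟩
  have pair_bound : ∀ JK ∈ T, (#(irregularPoints gd r D A B JK.1 JK.2) : ℝ) ≤
      (1 / r) ^ #JK.1 * (1 / r) ^ #JK.2 * #A := by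
    rintro ⟨J, K⟩ hJK
    simp only [T, Finset.mem_filter, Finset.mem_product, Finset.mem_erase,
      Finset.mem_powerset] at hJK
    obtain ⟨⟨hJ, -, hK⟩, hdisj, hlt⟩ := hJK
    exact (card_irregularPoints_le gd hr0 hD hw hτ hΛ hBne hA hB hJ hK hdisj hlt).trans
      (by gcongr; exact pow_le_one_div_pow_mul hr (gramNorm_nonneg _) hτ hw hk hnorm hlt)
  have sum_bound : (#{x ∈ A | ¬ IsPseudorandom gd r k D F B x} : ℝ) ≤ 1 / 2 * #A := by
    calc (#{x ∈ A | ¬ IsPseudorandom gd r k D F B x} : ℝ)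
        ≤ ∑ JK ∈ T, (#(irregularPoints gd r D A B JK.1 JK.2) : ℝ) := by
          exact_mod_cast (Finset.card_le_card cover).trans Finset.card_biUnion_le
      _ ≤ ∑ JK ∈ T, (1 / r) ^ #JK.1 * (1 / r) ^ #JK.2 * (#A : ℝ) := Finset.sum_le_sum pair_bound
      _ ≤ ∑ JK ∈ F.powerset ×ˢ F.powerset.erase ∅, (1 / r) ^ #JK.1 * (1 / r) ^ #JK.2 * (#A : ℝ) :=
          Finset.sum_le_sum_of_subset_of_nonneg (Finset.filter_subset _ _)
            fun _ _ _ => by positivity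
      _ ≤ 1 / 2 * #A := by
          rw [← Finset.sum_mul]
          gcongr
          exact sum_sum_powerset_le hr0 hF
  linarith

end Pseudorandom

/-! ### Points consistent with prescribed gadget values -/

section Consistent
variable {N Λ : Type*}

/-- The points `b` of `B` for which the gadget values of `x` and `b` on `I` are given by `z`. -/
def consistent (gd : Λ → Λ → Bool) (B : Finset (N → Λ)) (I : Finset N) (x : N → Λ)
    (z : N → Bool) : Finset (N → Λ) :=
  {b ∈ B | ∀ j ∈ I, gd (x j) (b j) = z j}

lemma mem_consistent {gd : Λ → Λ → Bool} {B : Finset (N → Λ)} {I : Finset N} {x b : N → Λ}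
    {z : N → Bool} : b ∈ consistent gd B I x z ↔ b ∈ B ∧ ∀ j ∈ I, gd (x j) (b j) = z j := by
  unfold consistent
  exact Finset.mem_filter

lemma consistent_subset (gd : Λ → Λ → Bool) (B : Finset (N → Λ)) (I : Finset N) (x : N → Λ)
    (z : N → Bool) : consistent gd B I x z ⊆ B := fun _ hb => (mem_consistent.1 hb).1

lemma fiber_consistent (gd : Λ → Λ → Bool) (B : Finset (N → Λ)) (I J : Finset N) (x : N → Λ)
    (z : N → Bool) (w : J → Λ) :
    fiber (consistent gd B I x z) J w = consistent gd (fiber B J w) I x z := by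
  ext b
  simp only [mem_fiber, mem_consistent]
  tauto

lemma prod_one_add_boolSign_mul (I : Finset N) (z z' : N → Bool) :
    ∏ j ∈ I, (1 + boolSign (z j) * boolSign (z' j)) =
      if ∀ j ∈ I, z' j = z j then (2 : ℝ) ^ #I else 0 := by
  split_ifs with h
  · rw [Finset.prod_congr rfl fun j hj => by rw [h j hj, boolSign_mul_self], Finset.prod_const]
    norm_num
  · push Not at h
    obtain ⟨j, hj, hne⟩ := h
    exact Finset.prod_eq_zero hj (by rw [boolSign_mul_boolSign_of_ne hne.symm]; norm_num)

lemma card_consistent_mul_two_pow (gd : Λ → Λ → Bool) (B : Finset (N → Λ)) (I : Finset N)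
    (x : N → Λ) (z : N → Bool) :
    (#(consistent gd B I x z) : ℝ) * 2 ^ #I =
      ∑ K ∈ I.powerset, (∏ j ∈ K, boolSign (z j)) * ∑ b ∈ B, character gd K x b := by
  calc (#(consistent gd B I x z) : ℝ) * 2 ^ #I
      = ∑ b ∈ B, ∏ j ∈ I, (1 + boolSign (z j) * boolSign (gd (x j) (b j))) := by
        simp only [prod_one_add_boolSign_mul, ← Finset.sum_filter, Finset.sum_const,
          nsmul_eq_mul, consistent]
    _ = ∑ b ∈ B, ∑ K ∈ I.powerset, (∏ j ∈ K, boolSign (z j)) * character gd K x b := by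
        simp only [Finset.prod_one_add, Finset.prod_mul_distrib, character]
    _ = _ := by
        rw [Finset.sum_comm]
        simp only [Finset.mul_sum]

lemma abs_prod_boolSign_mul (K : Finset N) (z : N → Bool) (s : ℝ) :
    |(∏ j ∈ K, boolSign (z j)) * s| = |s| := by
  simp [abs_mul, Finset.abs_prod, abs_boolSign]

variable {gd : Λ → Λ → Bool} {r : ℝ} {k : ℕ} {D : ℝ} {F : Finset N} {B : Finset (N → Λ)}
  {x : N → Λ}

lemma IsPseudorandom.card_le_card_consistent (hx : IsPseudorandom gd r k D F B x)
    (hr : 0 < r) {I : Finset N} (hIF : I ⊆ F) (hI : 4 * #I ≤ r) (z : N → Bool) :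
    2 * (#B : ℝ) ≤ 3 * 2 ^ #I * #(consistent gd B I x z) := by
  have fourier := card_consistent_mul_two_pow gd B I x z
  rw [← Finset.add_sum_erase _ _ (Finset.empty_mem_powerset _)] at fourier
  simp only [Finset.prod_empty, character_empty, Finset.sum_const, nsmul_eq_mul, one_mul,
    mul_one] at fourier
  have error : |∑ K ∈ I.powerset.erase ∅,
      (∏ j ∈ K, boolSign (z j)) * ∑ b ∈ B, character gd K x b| ≤ 1 / 3 * #B := by
    calc _ ≤ ∑ K ∈ I.powerset.erase ∅, (1 / r) ^ #K * (#B : ℝ) := by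
          refine (Finset.abs_sum_le_sum_abs _ _).trans (Finset.sum_le_sum fun K hK => ?_)
          rw [abs_prod_boolSign_mul]
          have hKI := Finset.mem_powerset.1 (Finset.mem_of_mem_erase hK)
          simpa [fiber_empty] using hx ∅ (Finset.empty_subset _) K (hKI.trans hIF)
            (Finset.disjoint_empty_left _) isEmptyElim
      _ ≤ 1 / 3 * #B := by
          rw [← Finset.sum_mul]
          gcongr
          exact sum_powerset_erase_empty_le hr hI
  linarith [(abs_le.1 error).1]

lemma IsPseudorandom.consistent_nonempty (hx : IsPseudorandom gd r k D F B x)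
    (hr : 0 < r) (hB : B.Nonempty) {I : Finset N} (hIF : I ⊆ F) (hI : 4 * #I ≤ r)
    (z : N → Bool) : (consistent gd B I x z).Nonempty := by
  rw [Finset.nonempty_iff_ne_empty]
  intro h
  have hB0 : (0 : ℝ) < #B := by exact_mod_cast hB.card_pos
  have := hx.card_le_card_consistent hr hIF hI z
  rw [h, Finset.card_empty, Nat.cast_zero, mul_zero] at this
  linarith

lemma IsPseudorandom.card_fiber_consistent_le (hx : IsPseudorandom gd r k D F B x) (hr : 0 < r)
    (hD : 0 ≤ D) {I J : Finset N} (hIF : I ⊆ F) (hI : 4 * #I ≤ r) (hJF : J ⊆ F)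
    (hJI : Disjoint J I) (z : N → Bool) (w : J → Λ) :
    3 * ((#(fiber (consistent gd B I x z) J w) : ℝ) * 2 ^ #I) ≤
      4 * (r ^ (k * #J) * (D ^ #J * #B)) := by
  have bound : (#(fiber (consistent gd B I x z) J w) : ℝ) * 2 ^ #I ≤
      ∑ K ∈ I.powerset, (1 / r) ^ #K * (r ^ (k * #J) * (D ^ #J * #B)) := by
    rw [fiber_consistent, card_consistent_mul_two_pow]
    refine Finset.sum_le_sum fun K hK => ?_
    have hKI := Finset.mem_powerset.1 hK
    calc _ ≤ |∑ b ∈ fiber B J w, character gd K x b| :=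
          (le_abs_self _).trans_eq (abs_prod_boolSign_mul _ _ _)
      _ ≤ r ^ (k * #J) * (1 / r) ^ #K * (D ^ #J * #B) :=
          hx J hJF K (hKI.trans hIF) (Finset.disjoint_of_subset_right hKI hJI) w
      _ = _ := by ring
  calc _ ≤ 3 * ((4 / 3) * (r ^ (k * #J) * (D ^ #J * #B))) := by
        rw [← Finset.sum_mul] at bound
        refine mul_le_mul_of_nonneg_left (bound.trans ?_) (by norm_num)
        gcongr
        exact sum_powerset_one_div_pow_le hr hI
    _ = _ := by ring

lemma IsPseudorandom.isSpread_consistent [DecidableEq N] (hx : IsPseudorandom gd r k D F B x)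
    (hr : 0 < r) (hD : 0 ≤ D) {I : Finset N} (hIF : I ⊆ F) (hI : 4 * #I ≤ r) (z : N → Bool) :
    IsSpread (2 * r ^ k * D) (F \ I) (consistent gd B I x z) := by
  refine isSpread_of_forall_mem (by positivity) fun J hJ hJne y _ => ?_
  have hJF : J ⊆ F := hJ.trans Finset.sdiff_subset
  have hJI : Disjoint J I := Finset.disjoint_of_subset_left hJ Finset.sdiff_disjoint
  have upper := hx.card_fiber_consistent_le hr hD hIF hI hJF hJI z (J.restrict y)
  have lower := hx.card_le_card_consistent hr hIF hI z
  have two_le : (2 : ℝ) ≤ 2 ^ #J := le_self_pow₀ (by norm_num) hJne.card_ne_zero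
  set C := consistent gd B I x z
  refine le_of_mul_le_mul_right ?_ (by positivity : (0 : ℝ) < 3 * 2 ^ #I)
  calc (#(fiber C J (J.restrict y)) : ℝ) * (3 * 2 ^ #I)
      ≤ 2 * (r ^ (k * #J) * D ^ #J * (2 * #B)) := by linarith
    _ ≤ 2 * (r ^ (k * #J) * D ^ #J * (3 * 2 ^ #I * #C)) := by gcongr
    _ ≤ 2 ^ #J * (r ^ (k * #J) * D ^ #J * (3 * 2 ^ #I * #C)) := by gcongr
    _ = (2 * r ^ k * D) ^ #J * #C * (3 * 2 ^ #I) := by rw [pow_mul]; ring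

end Consistent

/-! ### Simulation of a protocol on spread sets -/

section Simulation
variable {N Λ : Type*}

/-- The state of the simulation of a protocol on inputs of a lifted problem: the sets of inputs
still possible for the two players, the coordinates which have been fixed in each of them, and
the gadget values prescribed on the fixed coordinates (junk elsewhere). -/
structure SimState (N Λ : Type*) where
  left : Finset (N → Λ)
  right : Finset (N → Λ)
  leftFixed : Finset N
  rightFixed : Finset N
  values : N → Bool

namespace SimState

/-- The state with the roles of the players exchanged. -/
def swap (σ : SimState N Λ) : SimState N Λ :=
  ⟨σ.right, σ.left, σ.rightFixed, σ.leftFixed, σ.values⟩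

/-- The potential of a state. The factor `8 / D` pays for the loss in the size of the
rectangle caused by fixing one coordinate. -/
def weight (D : ℝ) (σ : SimState N Λ) : ℝ :=
  #σ.left * #σ.right * (8 / D) ^ (#σ.leftFixed + #σ.rightFixed)

lemma weight_nonneg {D : ℝ} (hD : 0 ≤ D) (σ : SimState N Λ) : 0 ≤ σ.weight D := by
  unfold weight
  positivity

lemma weight_swap (D : ℝ) (σ : SimState N Λ) : σ.swap.weight D = σ.weight D := by
  simp only [weight, swap, add_comm, mul_comm]

lemma weight_le_mul_weight_restrictLeft {D c : ℝ} (hD : 0 ≤ D) (σ : SimState N Λ)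
    {A : Finset (N → Λ)} (hcard : (#σ.left : ℝ) ≤ c * #A) :
    σ.weight D ≤ c * ({ σ with left := A } : SimState N Λ).weight D := by
  simp only [weight, ← mul_assoc]
  gcongr

/-- `σ'` is obtained from `σ` by shrinking the rectangle of possible inputs. -/
def Refines (σ' σ : SimState N Λ) : Prop := σ'.left ⊆ σ.left ∧ σ'.right ⊆ σ.right

lemma Refines.rfl {σ : SimState N Λ} : σ.Refines σ := ⟨subset_rfl, subset_rfl⟩

lemma Refines.trans {σ₁ σ₂ σ₃ : SimState N Λ} (h : σ₁.Refines σ₂) (h' : σ₂.Refines σ₃) :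
    σ₁.Refines σ₃ := ⟨h.1.trans h'.1, h.2.trans h'.2⟩

lemma Refines.swap {σ' σ : SimState N Λ} (h : σ'.Refines σ) : σ'.swap.Refines σ.swap :=
  ⟨h.2, h.1⟩

variable [DecidableEq N]

/-- The coordinates in `F` whose gadget value has not been prescribed yet. -/
def free (F : Finset N) (σ : SimState N Λ) : Finset N := F \ (σ.leftFixed ∪ σ.rightFixed)

lemma free_subset (F : Finset N) (σ : SimState N Λ) : σ.free F ⊆ F := Finset.sdiff_subset

lemma free_swap (F : Finset N) (σ : SimState N Λ) : σ.swap.free F = σ.free F := by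
  simp only [free, swap, Finset.union_comm]

/-- The invariant of the simulation: the inputs are constant on the fixed coordinates, the gadget
values there are the prescribed ones and satisfy `H`, and the inputs are spread on the free
coordinates, with parameters `DA` and `DB`. -/
structure Invariant (H : Finset N → (N → Bool) → Prop) (gd : Λ → Λ → Bool) (F : Finset N)
    (DA DB : ℝ) (σ : SimState N Λ) : Prop where
  left_nonempty : σ.left.Nonempty
  right_nonempty : σ.right.Nonempty
  leftFixed_subset : σ.leftFixed ⊆ F
  rightFixed_subset : σ.rightFixed ⊆ F
  left_const : ∀ x ∈ σ.left, ∀ x' ∈ σ.left, ∀ e ∈ σ.leftFixed, x e = x' e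
  right_const : ∀ y ∈ σ.right, ∀ y' ∈ σ.right, ∀ e ∈ σ.rightFixed, y e = y' e
  gadget_eq : ∀ x ∈ σ.left, ∀ y ∈ σ.right, ∀ e ∈ σ.leftFixed ∪ σ.rightFixed,
    gd (x e) (y e) = σ.values e
  values_mem : H (σ.leftFixed ∪ σ.rightFixed) σ.values
  left_spread : IsSpread DA (σ.free F) σ.left
  right_spread : IsSpread DB (σ.free F) σ.right

lemma Invariant.swap {H : Finset N → (N → Bool) → Prop} {gd : Λ → Λ → Bool} {F : Finset N}
    {DA DB : ℝ} {σ : SimState N Λ} (h : σ.Invariant H gd F DA DB) :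
    σ.swap.Invariant H (fun u v => gd v u) F DB DA where
  left_nonempty := h.right_nonempty
  right_nonempty := h.left_nonempty
  leftFixed_subset := h.rightFixed_subset
  rightFixed_subset := h.leftFixed_subset
  left_const := h.right_const
  right_const := h.left_const
  gadget_eq y hy x hx e he := h.gadget_eq x hx y hy e (by rwa [Finset.union_comm])
  values_mem := by simpa only [SimState.swap, Finset.union_comm] using h.values_mem
  left_spread := by rw [free_swap]; exact h.right_spread
  right_spread := by rw [free_swap]; exact h.left_spread

lemma Invariant.restrictLeft {H : Finset N → (N → Bool) → Prop} {gd : Λ → Λ → Bool}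
    {F : Finset N} {DA DA' DB : ℝ} {σ : SimState N Λ} (h : σ.Invariant H gd F DA DB)
    {A : Finset (N → Λ)} (hA : A ⊆ σ.left) (hne : A.Nonempty)
    (hspread : IsSpread DA' (σ.free F) A) :
    ({ σ with left := A } : SimState N Λ).Invariant H gd F DA' DB :=
  { h with
    left_nonempty := hne
    left_const := fun x hx x' hx' => h.left_const x (hA hx) x' (hA hx')
    gadget_eq := fun x hx => h.gadget_eq x (hA hx)
    left_spread := hspread }

/-- The state obtained by fixing Alice's coordinates in `I` as in `x`, with `A` the inputs of
Alice before that, and Bob's inputs so that the gadget values on `I` agree with `ρ`. -/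
def fixLeft (gd : Λ → Λ → Bool) (σ : SimState N Λ) (A : Finset (N → Λ)) (I : Finset N)
    (x : N → Λ) (ρ : N → Bool) : SimState N Λ where
  left := fiber A I (I.restrict x)
  right := consistent gd σ.right I x ρ
  leftFixed := σ.leftFixed ∪ I
  rightFixed := σ.rightFixed
  values := ρ

lemma fixLeft_refines (gd : Λ → Λ → Bool) {σ : SimState N Λ} {A : Finset (N → Λ)}
    (hA : A ⊆ σ.left) (I : Finset N) (x : N → Λ) (ρ : N → Bool) :
    (σ.fixLeft gd A I x ρ).Refines σ :=
  ⟨(fiber_subset _ _ _).trans hA, consistent_subset _ _ _ _ _⟩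

lemma free_fixLeft (gd : Λ → Λ → Bool) (F : Finset N) (σ : SimState N Λ) (A : Finset (N → Λ))
    (I : Finset N) (x : N → Λ) (ρ : N → Bool) :
    (σ.fixLeft gd A I x ρ).free F = σ.free F \ I := by
  ext e
  simp only [free, fixLeft, Finset.mem_sdiff, Finset.mem_union]
  tauto

lemma Invariant.fixLeft {H : Finset N → (N → Bool) → Prop} {gd : Λ → Λ → Bool} {F : Finset N}
    {DA DB DA' DB' : ℝ} {σ : SimState N Λ} (h : σ.Invariant H gd F DA DB) {A : Finset (N → Λ)}
    (hA : A ⊆ σ.left) {I : Finset N} (hI : I ⊆ σ.free F) {x : N → Λ} (hx : x ∈ A)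
    {ρ : N → Bool} (hρ : ∀ e ∈ σ.leftFixed ∪ σ.rightFixed, ρ e = σ.values e)
    (hH : H (σ.leftFixed ∪ σ.rightFixed ∪ I) ρ)
    (hne : (consistent gd σ.right I x ρ).Nonempty)
    (hleft : IsSpread DA' (σ.free F \ I) (fiber A I (I.restrict x)))
    (hright : IsSpread DB' (σ.free F \ I) (consistent gd σ.right I x ρ)) :
    (σ.fixLeft gd A I x ρ).Invariant H gd F DA' DB' := by
  have fiber_eq : ∀ {a}, a ∈ fiber A I (I.restrict x) → ∀ e ∈ I, a e = x e := fun ha =>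
    restrict_eq_restrict_iff.1 (mem_fiber.1 ha).2
  have hsub := fixLeft_refines gd hA I x ρ
  refine ⟨⟨x, mem_fiber.2 ⟨hx, rfl⟩⟩, hne, Finset.union_subset h.leftFixed_subset
    (hI.trans (free_subset F σ)), h.rightFixed_subset, ?_, ?_, ?_, ?_, ?_, ?_⟩
  · intro a ha a' ha' e he
    obtain he | he := Finset.mem_union.1 he
    · exact h.left_const a (hsub.1 ha) a' (hsub.1 ha') e he
    · rw [fiber_eq ha e he, fiber_eq ha' e he]
  · exact fun b hb b' hb' => h.right_const b (hsub.2 hb) b' (hsub.2 hb')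
  · intro a ha b hb e he
    by_cases heI : e ∈ I
    · rw [fiber_eq ha e heI]
      exact (mem_consistent.1 hb).2 e heI
    · have he' : e ∈ σ.leftFixed ∪ σ.rightFixed := by
        simp only [SimState.fixLeft, Finset.mem_union] at he ⊢
        tauto
      exact (h.gadget_eq a (hsub.1 ha) b (hsub.2 hb) e he').trans (hρ e he').symm
  · simpa only [SimState.fixLeft, Finset.union_right_comm] using hH
  · rwa [free_fixLeft]
  · rwa [free_fixLeft]

-- Both constants `2` are absorbed by the surplus of `8 / D` over `2 / D`, since `4 ≤ 4 ^ #I`.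
lemma weight_le_weight_fixLeft (gd : Λ → Λ → Bool) {D : ℝ} (hD : 0 < D) {F : Finset N}
    (σ : SimState N Λ) {A : Finset (N → Λ)} {I : Finset N} (hI : I ⊆ σ.free F)
    (hIne : I.Nonempty) {x : N → Λ} {ρ : N → Bool}
    (hA : D ^ #I * (#σ.left : ℝ) ≤ 2 * #(fiber A I (I.restrict x)))
    (hB : (#σ.right : ℝ) ≤ 2 * 2 ^ #I * #(consistent gd σ.right I x ρ)) :
    σ.weight D ≤ (σ.fixLeft gd A I x ρ).weight D := by
  have hdisj : Disjoint σ.leftFixed I :=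
    (Finset.disjoint_of_subset_left hI (Finset.disjoint_of_subset_right
      Finset.subset_union_left Finset.sdiff_disjoint)).symm
  have four_le : (4 : ℝ) ≤ 4 ^ #I := le_self_pow₀ (by norm_num) hIne.card_ne_zero
  set A' := fiber A I (I.restrict x)
  set B' := consistent gd σ.right I x ρ
  have rectangle_le : (#σ.left : ℝ) * #σ.right ≤ #A' * #B' * (8 / D) ^ #I := by
    rw [div_pow, mul_div_assoc', le_div_iff₀ (by positivity)]
    calc (#σ.left : ℝ) * #σ.right * D ^ #I = (D ^ #I * #σ.left) * #σ.right := by ring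
      _ ≤ (2 * #A') * (2 * 2 ^ #I * #B') := by gcongr
      _ = #A' * #B' * 2 ^ #I * 4 := by ring
      _ ≤ #A' * #B' * 2 ^ #I * 4 ^ #I := by gcongr
      _ = #A' * #B' * 8 ^ #I := by rw [mul_assoc _ (2 ^ #I), ← mul_pow]; norm_num
  calc σ.weight D ≤ #A' * #B' * (8 / D) ^ #I * (8 / D) ^ (#σ.leftFixed + #σ.rightFixed) := by
        unfold weight
        gcongr
    _ = #A' * #B' * (8 / D) ^ (#σ.leftFixed + #I + #σ.rightFixed) := by
        rw [mul_assoc _ ((8 / D) ^ #I), ← pow_add]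
        congr 2
        ring
    _ = (σ.fixLeft gd A I x ρ).weight D := by
        simp only [weight, SimState.fixLeft, Finset.card_union_of_disjoint hdisj, A', B']

end SimState

/-- `H` is extendable when values satisfying it on a set of coordinates can be extended to any
further coordinates so as to satisfy it there. The simulation lets such an adversary choose the
gadget values. -/
def Extendable [DecidableEq N] (H : Finset N → (N → Bool) → Prop) : Prop :=
  ∀ Q I ρ, H Q ρ → ∃ ρ', (∀ e ∈ Q, ρ' e = ρ e) ∧ H (Q ∪ I) ρ'

/-- The numerical conditions under which the simulation on the coordinates `F` works: `r` is the
gain per coordinate in character sums, `D` the spread parameter, and `τ` a `k`-th root of the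
size of the gadget's domain. -/
structure SimParams [Fintype Λ] (gd : Λ → Λ → Bool) (F : Finset N) (r : ℝ) (k : ℕ) (D τ : ℝ) :
    Prop where
  pos_D : 0 < D
  one_le_r : 1 ≤ r
  four_mul_card_le : 4 * #F ≤ r
  one_le_k : 1 ≤ k
  one_le_τ : 1 ≤ τ
  card_le_pow : Fintype.card Λ ≤ τ ^ k
  norm_le_one : τ * (2 * r ^ k) * gramNorm (signMatrix gd) * D ^ 2 * r ^ 4 ≤ 1

namespace SimParams
variable [Fintype Λ] {gd : Λ → Λ → Bool} {F : Finset N} {r : ℝ} {k : ℕ} {D τ : ℝ}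

lemma swap (hP : SimParams gd F r k D τ) : SimParams (fun u v => gd v u) F r k D τ :=
  { hP with
    norm_le_one := by
      rw [show signMatrix (fun u v => gd v u) = (signMatrix gd)ᵀ from rfl, gramNorm_transpose]
      exact hP.norm_le_one }

lemma pos_r (hP : SimParams gd F r k D τ) : 0 < r := one_pos.trans_le hP.one_le_r

lemma one_le_pow_r (hP : SimParams gd F r k D τ) : 1 ≤ r ^ k := one_le_pow₀ hP.one_le_r

lemma four_mul_card_le_of_subset (hP : SimParams gd F r k D τ) {I : Finset N} (hI : I ⊆ F) :
    4 * #I ≤ r := by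
  refine le_trans ?_ hP.four_mul_card_le
  gcongr

lemma isSpread_of_card_le (hP : SimParams gd F r k D τ) {F' : Finset N} {A A' : Finset (N → Λ)}
    (hA : IsSpread D F' A) (hsub : A' ⊆ A) (hcard : (#A : ℝ) ≤ 2 * #A') :
    IsSpread (2 * r ^ k * D) F' A' := by
  have hr := hP.one_le_pow_r
  refine hA.subset hP.pos_D.le (by linarith) hsub (hcard.trans ?_)
  gcongr
  linarith

lemma card_le_two_mul_card_isPseudorandom (hP : SimParams gd F r k D τ) {F' : Finset N}
    (hF' : F' ⊆ F) {A B : Finset (N → Λ)} (hB : B.Nonempty) (hAs : IsSpread (2 * r ^ k * D) F' A)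
    (hBs : IsSpread D F' B) :
    (#A : ℝ) ≤ 2 * #{x ∈ A | IsPseudorandom gd r k D F' B x} := by
  have hr := hP.pos_r
  have bad := two_mul_card_not_isPseudorandom_le gd hP.one_le_r hP.one_le_k hP.pos_D
    (by positivity) hP.one_le_τ hP.card_le_pow hP.norm_le_one
    (hP.four_mul_card_le_of_subset hF') hB hAs hBs
  have split : (#{x ∈ A | IsPseudorandom gd r k D F' B x} : ℝ) +
      #{x ∈ A | ¬ IsPseudorandom gd r k D F' B x} = #A := by
    exact_mod_cast Finset.card_filter_add_card_filter_not _
  linarith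

variable [DecidableEq N] {H : Finset N → (N → Bool) → Prop} {σ : SimState N Λ}

lemma restore_or_fix (hP : SimParams gd F r k D τ) (hH : Extendable H)
    (hσ : σ.Invariant H gd F (2 * r ^ k * D) D) :
    (∃ σ' : SimState N Λ, σ'.Refines σ ∧ σ'.Invariant H gd F D D ∧
      σ.weight D ≤ 2 * σ'.weight D) ∨
    ∃ σ' : SimState N Λ, σ'.Refines σ ∧ #(σ'.free F) < #(σ.free F) ∧
      σ'.Invariant H gd F D (2 * r ^ k * D) ∧ σ.weight D ≤ σ'.weight D := by
  have hD := hP.pos_D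
  set A := {x ∈ σ.left | IsPseudorandom gd r k D (σ.free F) σ.right x} with hAdef
  have hAsub : A ⊆ σ.left := Finset.filter_subset _ _
  have hAcard : (#σ.left : ℝ) ≤ 2 * #A := hP.card_le_two_mul_card_isPseudorandom
    (σ.free_subset F) hσ.right_nonempty hσ.left_spread hσ.right_spread
  have hAne : A.Nonempty := by
    have : (0 : ℝ) < #σ.left := by exact_mod_cast hσ.left_nonempty.card_pos
    exact Finset.card_pos.1 (by exact_mod_cast (by linarith : (0 : ℝ) < #A))
  obtain ⟨I, hI, x, hxA, hheavy, hspread⟩ := exists_isSpread_fiber hD (σ.free F) hAne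
  obtain rfl | hIne := I.eq_empty_or_nonempty
  · rw [fiber_empty, Finset.sdiff_empty] at hspread
    exact .inl ⟨{ σ with left := A }, ⟨hAsub, subset_rfl⟩, hσ.restrictLeft hAsub hAne hspread,
      σ.weight_le_mul_weight_restrictLeft hD.le hAcard⟩
  right
  have hx : IsPseudorandom gd r k D (σ.free F) σ.right x := by
    rw [hAdef] at hxA
    exact (Finset.mem_filter.1 hxA).2
  have hIr := hP.four_mul_card_le_of_subset (hI.trans (σ.free_subset F))
  obtain ⟨ρ, hρ, hHρ⟩ := hH _ I _ hσ.values_mem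
  refine ⟨σ.fixLeft gd A I x ρ, σ.fixLeft_refines gd hAsub I x ρ, ?_,
    hσ.fixLeft hAsub hI hxA hρ hHρ
      (hx.consistent_nonempty hP.pos_r hσ.right_nonempty hI hIr ρ) hspread
      (hx.isSpread_consistent hP.pos_r hD.le hI hIr ρ),
    σ.weight_le_weight_fixLeft gd hD hI hIne ?_ ?_⟩
  · rw [SimState.free_fixLeft]
    exact Finset.card_lt_card (Finset.sdiff_ssubset hI hIne)
  · calc D ^ #I * (#σ.left : ℝ) ≤ D ^ #I * (2 * #A) := by gcongr
      _ = 2 * (D ^ #I * #A) := by ring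
      _ ≤ 2 * #(fiber A I (I.restrict x)) := by gcongr
  · have lower := hx.card_le_card_consistent hP.pos_r hI hIr ρ
    have : (0 : ℝ) ≤ 2 ^ #I * #(consistent gd σ.right I x ρ) := by positivity
    linarith

lemma exists_restored (hP : SimParams gd F r k D τ) (hH : Extendable H)
    (hσ : σ.Invariant H gd F (2 * r ^ k * D) D) :
    ∃ σ' : SimState N Λ, σ'.Refines σ ∧ σ'.Invariant H gd F D D ∧
      σ.weight D ≤ 2 * σ'.weight D := by
  induction hn : #(σ.free F) using Nat.strong_induction_on generalizing gd σ with
  | _ n ih =>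
    obtain h | ⟨σ₁, hsub, hlt, hσ₁, hweight⟩ := hP.restore_or_fix hH hσ
    · exact h
    obtain ⟨σ₂, hsub₂, hσ₂, hweight₂⟩ :=
      ih _ (hn ▸ hlt) hP.swap hσ₁.swap (by rw [SimState.free_swap])
    rw [SimState.weight_swap] at hweight₂
    refine ⟨σ₂.swap, hsub₂.swap.trans hsub, hσ₂.swap, ?_⟩
    rw [SimState.weight_swap]
    linarith

lemma exists_const_bit (hP : SimParams gd F r k D τ) (hH : Extendable H)
    (hσ : σ.Invariant H gd F D D) (h : (N → Λ) → Bool) :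
    ∃ (b : Bool) (σ' : SimState N Λ), σ'.Refines σ ∧ σ'.Invariant H gd F D D ∧
      (∀ x ∈ σ'.left, h x = b) ∧ σ.weight D ≤ 4 * σ'.weight D := by
  obtain ⟨b, hb⟩ : ∃ b, (#σ.left : ℝ) ≤ 2 * #{x ∈ σ.left | h x = b} := by
    by_contra! hlt
    have split : #{x ∈ σ.left | h x = true} + #{x ∈ σ.left | h x = false} = #σ.left := by
      simpa using Finset.card_filter_add_card_filter_not (s := σ.left) (fun x => h x = true)
    have split' : (#{x ∈ σ.left | h x = true} : ℝ) + #{x ∈ σ.left | h x = false} = #σ.left := by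
      exact_mod_cast split
    linarith [hlt true, hlt false]
  set A := {x ∈ σ.left | h x = b}
  have hAsub : A ⊆ σ.left := Finset.filter_subset _ _
  have hAne : A.Nonempty := by
    have : (0 : ℝ) < #σ.left := by exact_mod_cast hσ.left_nonempty.card_pos
    exact Finset.card_pos.1 (by exact_mod_cast (by linarith : (0 : ℝ) < #A))
  obtain ⟨σ', hsub, hσ', hweight⟩ := hP.exists_restored hH
    (hσ.restrictLeft hAsub hAne (hP.isSpread_of_card_le hσ.left_spread hAsub hb))
  refine ⟨b, σ', hsub.trans ⟨hAsub, subset_rfl⟩, hσ',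
    fun x hx => (Finset.mem_filter.1 (hsub.1 hx)).2, ?_⟩
  have := σ.weight_le_mul_weight_restrictLeft hP.pos_D.le hb
  linarith

end SimParams

end Simulation

section SimulateProtocol
variable {N Λ : Type} [DecidableEq N] [Fintype Λ] {gd : Λ → Λ → Bool} {F : Finset N} {r : ℝ}
  {k : ℕ} {D τ : ℝ} {H : Finset N → (N → Bool) → Prop}

lemma SimParams.exists_const_run (hP : SimParams gd F r k D τ) (hH : Extendable H) {O : Type}
    (p : Protocol (N → Λ) (N → Λ) O) {σ : SimState N Λ} (hσ : σ.Invariant H gd F D D) :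
    ∃ (o : O) (σ' : SimState N Λ), σ'.Refines σ ∧ σ'.Invariant H gd F D D ∧
      (∀ x ∈ σ'.left, ∀ y ∈ σ'.right, p.run x y = o) ∧
      σ.weight D ≤ 4 ^ p.depth * σ'.weight D := by
  have step : ∀ {σ σ₁ σ₂ : SimState N Λ} {d e : ℕ}, σ.weight D ≤ 4 * σ₁.weight D →
      σ₁.weight D ≤ 4 ^ d * σ₂.weight D → d ≤ e → σ.weight D ≤ 4 ^ (e + 1) * σ₂.weight D := by
    intro σ σ₁ σ₂ d e h₁ h₂ hde
    have h₀ := σ₂.weight_nonneg hP.pos_D.le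
    calc σ.weight D ≤ 4 * (4 ^ d * σ₂.weight D) := by linarith
      _ ≤ 4 * (4 ^ e * σ₂.weight D) := by gcongr; norm_num
      _ = 4 ^ (e + 1) * σ₂.weight D := by ring
  induction p generalizing σ with
  | leaf o => exact ⟨o, σ, .rfl, hσ, fun _ _ _ _ => rfl, by simp [Protocol.depth]⟩
  | nodeA h p0 p1 ih0 ih1 =>
    obtain ⟨b, σ₁, hsub₁, hσ₁, hb, hweight₁⟩ := hP.exists_const_bit hH hσ h
    cases b
    · obtain ⟨o, σ₂, hsub₂, hσ₂, ho, hweight₂⟩ := ih0 hσ₁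
      exact ⟨o, σ₂, hsub₂.trans hsub₁, hσ₂,
        fun x hx y hy => by simp [Protocol.run, hb x (hsub₂.1 hx), ho x hx y hy],
        step hweight₁ hweight₂ (le_max_left _ _)⟩
    · obtain ⟨o, σ₂, hsub₂, hσ₂, ho, hweight₂⟩ := ih1 hσ₁
      exact ⟨o, σ₂, hsub₂.trans hsub₁, hσ₂,
        fun x hx y hy => by simp [Protocol.run, hb x (hsub₂.1 hx), ho x hx y hy],
        step hweight₁ hweight₂ (le_max_right _ _)⟩
  | nodeB h p0 p1 ih0 ih1 =>
    obtain ⟨b, σ₁, hsub₁, hσ₁, hb, hweight₁⟩ := hP.swap.exists_const_bit hH hσ.swap h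
    rw [SimState.weight_swap, ← SimState.weight_swap D σ₁] at hweight₁
    cases b
    · obtain ⟨o, σ₂, hsub₂, hσ₂, ho, hweight₂⟩ := ih0 hσ₁.swap
      exact ⟨o, σ₂, hsub₂.trans hsub₁.swap, hσ₂,
        fun x hx y hy => by simp [Protocol.run, hb y (hsub₂.2 hy), ho x hx y hy],
        step hweight₁ hweight₂ (le_max_left _ _)⟩
    · obtain ⟨o, σ₂, hsub₂, hσ₂, ho, hweight₂⟩ := ih1 hσ₁.swap
      exact ⟨o, σ₂, hsub₂.trans hsub₁.swap, hσ₂,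
        fun x hx y hy => by simp [Protocol.run, hb y (hsub₂.2 hy), ho x hx y hy],
        step hweight₁ hweight₂ (le_max_right _ _)⟩

end SimulateProtocol

/-! ### The query adversary -/

section Adversary
variable {ι κ O : Type} [DecidableEq ι] {S : (κ → Bool) → O → Prop}
  {Q : Finset (ι × κ)} {ρ : ι × κ → Bool}

/-- In each row of an `ι × κ` matrix of bits, knowing the entries `ρ` at the positions in `Q` and
making further queries does not suffice to solve `S`, as long as the total number of entries of
the row seen is less than the query complexity of `S`. -/
def FoolsTrees (S : (κ → Bool) → O → Prop) (Q : Finset (ι × κ)) (ρ : ι × κ → Bool) : Prop :=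
  ∀ (i : ι) (T : DTree κ O), T.depth + #{e ∈ Q | e.1 = i} < Qcomplexity S →
    ∃ z : κ → Bool, (∀ j, (i, j) ∈ Q → z j = ρ (i, j)) ∧ ¬ S z (T.run z)

lemma foolsTrees_empty (S : (κ → Bool) → O → Prop) (ρ : ι × κ → Bool) : FoolsTrees S ∅ ρ := by
  intro i T hT
  by_contra! h
  have : Qcomplexity S ≤ T.depth := Nat.sInf_le ⟨T, fun z => h z (by simp), rfl⟩
  omega

variable [DecidableEq κ]

lemma FoolsTrees.exists_tree_of_not_insert (h : FoolsTrees S Q ρ) {e : ι × κ} (he : e ∉ Q)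
    {b : Bool} (hb : ¬ FoolsTrees S (insert e Q) (Function.update ρ e b)) :
    ∃ T : DTree κ O, T.depth + 1 + #{e' ∈ Q | e'.1 = e.1} < Qcomplexity S ∧
      ∀ z : κ → Bool, (∀ j, (e.1, j) ∈ Q → z j = ρ (e.1, j)) → z e.2 = b → S z (T.run z) := by
  obtain ⟨i₀, j₀⟩ := e
  simp only [FoolsTrees] at hb
  push Not at hb
  obtain ⟨i, T, hT, hz⟩ := hb
  have agrees : ∀ z : κ → Bool, (∀ j, (i, j) ∈ Q → z j = ρ (i, j)) → (i = i₀ → z j₀ = b) →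
      S z (T.run z) := by
    refine fun z hzQ hzb => hz z fun j hj => ?_
    obtain hj | hj := Finset.mem_insert.1 hj
    · obtain ⟨rfl, rfl⟩ := Prod.mk.inj hj
      rw [Function.update_self, hzb rfl]
    · rw [Function.update_of_ne (ne_of_mem_of_not_mem hj he), hzQ j hj]
  rw [Finset.filter_insert] at hT
  obtain rfl | hi := eq_or_ne i₀ i
  · rw [if_pos rfl, Finset.card_insert_of_notMem (by simp [he])] at hT
    exact ⟨T, by dsimp only; omega, fun z hzQ hzb => agrees z hzQ fun _ => hzb⟩
  · rw [if_neg hi] at hT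
    obtain ⟨z, hzQ, hzS⟩ := h i T hT
    exact absurd (agrees z hzQ fun h => absurd h.symm hi) hzS

lemma FoolsTrees.exists_insert (h : FoolsTrees S Q ρ) {e : ι × κ} (he : e ∉ Q) :
    ∃ b, FoolsTrees S (insert e Q) (Function.update ρ e b) := by
  by_contra! hno
  obtain ⟨T₀, hd₀, h₀⟩ := h.exists_tree_of_not_insert he (hno false)
  obtain ⟨T₁, hd₁, h₁⟩ := h.exists_tree_of_not_insert he (hno true)
  obtain ⟨z, hzQ, hzS⟩ := h e.1 (DTree.node e.2 T₀ T₁) (by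
    simp only [DTree.depth]
    omega)
  refine hzS ?_
  simp only [DTree.run]
  cases hb : z e.2 with
  | true => simpa using h₁ z hzQ hb
  | false => simpa using h₀ z hzQ hb

lemma extendable_foolsTrees (S : (κ → Bool) → O → Prop) :
    Extendable (FoolsTrees S : Finset (ι × κ) → (ι × κ → Bool) → Prop) := by
  intro Q I ρ h
  induction I using Finset.induction_on with
  | empty => exact ⟨ρ, fun _ _ => rfl, by simpa using h⟩
  | insert e I _ ih =>
    obtain ⟨ρ', hρ', hfool⟩ := ih
    rw [Finset.union_insert]
    by_cases he : e ∈ Q ∪ I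
    · exact ⟨ρ', hρ', by rwa [Finset.insert_eq_self.2 he]⟩
    · obtain ⟨b, hb⟩ := hfool.exists_insert he
      refine ⟨_, fun e' he' => ?_, hb⟩
      rw [Function.update_of_ne (ne_of_mem_of_not_mem (Finset.mem_union_left _ he') he), hρ' e' he']

end Adversary

/-! ### Lifting query complexity to communication complexity -/

section Lifting
variable {ι κ O Λ : Type} [Fintype Λ] {S : (κ → Bool) → O → Prop} {gd : Λ → Λ → Bool}
  {F : Finset (ι × κ)} {r : ℝ} {k : ℕ} {D τ : ℝ}

-- A pseudorandom input of Alice can be completed by Bob to any gadget values on the free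
-- coordinates, in particular to a row which fools the tree making no query.
lemma SimParams.qcomplexity_le [DecidableEq ι] [DecidableEq κ] (hP : SimParams gd F r k D τ)
    {σ : SimState (ι × κ) Λ} (hσ : σ.Invariant (FoolsTrees S) gd F D D) {i : ι} {o : O}
    (hi : ∀ j, (i, j) ∈ F)
    (ho : ∀ x ∈ σ.left, ∀ y ∈ σ.right, S (fun j => gd (x (i, j)) (y (i, j))) o) :
    Qcomplexity S ≤ #σ.leftFixed + #σ.rightFixed := by
  by_contra! hlt
  have row_le : #{e ∈ σ.leftFixed ∪ σ.rightFixed | e.1 = i} ≤ #σ.leftFixed + #σ.rightFixed :=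
    (Finset.card_filter_le _ _).trans (Finset.card_union_le _ _)
  obtain ⟨z, hz, hzS⟩ := hσ.values_mem i (.leaf o) (by simp only [DTree.depth]; omega)
  obtain ⟨x, hxA, hx⟩ : ∃ x ∈ σ.left, IsPseudorandom gd r k D (σ.free F) σ.right x := by
    have half := hP.card_le_two_mul_card_isPseudorandom (σ.free_subset F) hσ.right_nonempty
      (hP.isSpread_of_card_le hσ.left_spread subset_rfl (by linarith)) hσ.right_spread
    have : (0 : ℝ) < #σ.left := by exact_mod_cast hσ.left_nonempty.card_pos
    have hpos : (0 : ℝ) < #{x ∈ σ.left | IsPseudorandom gd r k D (σ.free F) σ.right x} := by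
      linarith
    obtain ⟨x, hx⟩ := Finset.card_pos.1 (by exact_mod_cast hpos)
    exact ⟨x, Finset.mem_filter.1 hx⟩
  obtain ⟨y, hy⟩ := hx.consistent_nonempty hP.pos_r hσ.right_nonempty subset_rfl
    (hP.four_mul_card_le_of_subset (σ.free_subset F)) fun e => z e.2
  obtain ⟨hyB, hyz⟩ := mem_consistent.1 hy
  suffices z = fun j => gd (x (i, j)) (y (i, j)) from hzS (this ▸ ho x hxA y hyB)
  funext j
  by_cases hj : (i, j) ∈ σ.leftFixed ∪ σ.rightFixed
  · rw [hz j hj, hσ.gadget_eq x hxA y hyB _ hj]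
  · exact (hyz (i, j) (Finset.mem_sdiff.2 ⟨hi j, hj⟩)).symm

lemma IsSpread.card_le_of_const {N Λ : Type*} {δ : ℝ} {F I : Finset N} {V A : Finset (N → Λ)}
    (hV : IsSpread δ F V) (hI : I ⊆ F) (hA : A ⊆ V) (hne : A.Nonempty)
    (hconst : ∀ x ∈ A, ∀ x' ∈ A, ∀ e ∈ I, x e = x' e) : (#A : ℝ) ≤ δ ^ #I * #V := by
  obtain ⟨x, hx⟩ := hne
  refine le_trans ?_ (hV I hI (I.restrict x))
  exact_mod_cast Finset.card_le_card fun a ha =>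
    mem_fiber.2 ⟨hA ha, restrict_eq_restrict_iff.2 (hconst a ha x hx)⟩

lemma SimState.Invariant.weight_le {N Λ : Type*} [DecidableEq N]
    {H : Finset N → (N → Bool) → Prop} {gd : Λ → Λ → Bool} {F : Finset N} {D δ : ℝ}
    {σ : SimState N Λ} (hσ : σ.Invariant H gd F D D) {V : Finset (N → Λ)}
    (hD : 0 ≤ D) (hδ : 0 ≤ δ) (hV : IsSpread δ F V) (hleft : σ.left ⊆ V) (hright : σ.right ⊆ V) :
    σ.weight D ≤ #V * #V * (8 * δ / D) ^ (#σ.leftFixed + #σ.rightFixed) := by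
  have left_le := hV.card_le_of_const hσ.leftFixed_subset hleft hσ.left_nonempty hσ.left_const
  have right_le :=
    hV.card_le_of_const hσ.rightFixed_subset hright hσ.right_nonempty hσ.right_const
  calc σ.weight D ≤ (δ ^ #σ.leftFixed * #V) * (δ ^ #σ.rightFixed * #V) *
        (8 / D) ^ (#σ.leftFixed + #σ.rightFixed) := by
        unfold SimState.weight
        gcongr
    _ = _ := by
        rw [mul_comm 8 δ, mul_div_assoc, mul_pow, pow_add δ]
        ring

lemma SimParams.exists_one_le_pow_mul (hP : SimParams gd F r k D τ) {δ : ℝ} (hδ : 0 ≤ δ)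
    (hδD : δ ≤ D) {V : Finset (ι × κ → Λ)} (hV : V.Nonempty) (hspread : IsSpread δ F V)
    (p : Protocol (ι × κ → Λ) (ι × κ → Λ) (ι × O))
    (hF : ∀ x ∈ V, ∀ y ∈ V, ∀ j, ((p.run x y).1, j) ∈ F)
    (hS : ∀ x ∈ V, ∀ y ∈ V,
      S (fun j => gd (x ((p.run x y).1, j)) (y ((p.run x y).1, j))) (p.run x y).2) :
    ∃ q, Qcomplexity S ≤ q ∧ 1 ≤ (8 * δ / D) ^ q * 4 ^ p.depth := by
  classical
  have hspreadD : IsSpread D F V := hspread.weaken hδ hδD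
  have initial : (⟨V, V, ∅, ∅, fun _ => false⟩ : SimState (ι × κ) Λ).Invariant (FoolsTrees S)
      gd F D D :=
    ⟨hV, hV, by simp, by simp, by simp, by simp, by simp, foolsTrees_empty S _,
      by simpa [SimState.free] using hspreadD, by simpa [SimState.free] using hspreadD⟩
  obtain ⟨o, σ, ⟨hleft, hright⟩, hσ, ho, hweight⟩ :=
    hP.exists_const_run (extendable_foolsTrees S) p initial
  refine ⟨#σ.leftFixed + #σ.rightFixed, hP.qcomplexity_le (i := o.1) (o := o.2) hσ ?_ ?_, ?_⟩
  · obtain ⟨⟨x, hx⟩, y, hy⟩ := And.intro hσ.left_nonempty hσ.right_nonempty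
    simpa only [ho x hx y hy] using hF x (hleft hx) y (hright hy)
  · intro x hx y hy
    simpa only [ho x hx y hy] using hS x (hleft hx) y (hright hy)
  · have hVpos : (0 : ℝ) < #V * #V := by
      have : (0 : ℝ) < #V := by exact_mod_cast hV.card_pos
      positivity
    refine le_of_mul_le_mul_left ?_ hVpos
    calc (#V * #V : ℝ) * 1 = SimState.weight D ⟨V, V, ∅, ∅, fun _ => false⟩ := by
          simp [SimState.weight]
      _ ≤ 4 ^ p.depth * (#V * #V * (8 * δ / D) ^ (#σ.leftFixed + #σ.rightFixed)) :=
          hweight.trans (by gcongr; exact hσ.weight_le hP.pos_D.le hδ hspread hleft hright)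
      _ = _ := by ring

end Lifting

/-! ### Protocol trees -/

namespace Protocol
variable {X Y X' Y' O : Type}

/-- The protocol tree obtained by turning every message function of Alice and of Bob into a
function of other inputs. -/
def translate (φ : (X → Bool) → X' → Bool) (ψ : (Y → Bool) → Y' → Bool) :
    Protocol X Y O → Protocol X' Y' O
  | leaf o => leaf o
  | nodeA h p₀ p₁ => nodeA (φ h) (p₀.translate φ ψ) (p₁.translate φ ψ)
  | nodeB h p₀ p₁ => nodeB (ψ h) (p₀.translate φ ψ) (p₁.translate φ ψ)

section
variable {φ : (X → Bool) → X' → Bool} {ψ : (Y → Bool) → Y' → Bool}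

lemma run_translate (p : Protocol X Y O) {x : X} {y : Y} {x' : X'} {y' : Y'}
    (hx : ∀ h, φ h x' = h x) (hy : ∀ h, ψ h y' = h y) :
    (p.translate φ ψ).run x' y' = p.run x y := by
  induction p with
  | leaf o => rfl
  | nodeA h p₀ p₁ ih₀ ih₁ => simp only [translate, run, hx, ih₀, ih₁]
  | nodeB h p₀ p₁ ih₀ ih₁ => simp only [translate, run, hy, ih₀, ih₁]

lemma leaves_translate (p : Protocol X Y O) : (p.translate φ ψ).leaves = p.leaves := by
  induction p with
  | leaf o => rfl
  | nodeA h p₀ p₁ ih₀ ih₁ | nodeB h p₀ p₁ ih₀ ih₁ => simp only [translate, leaves, ih₀, ih₁]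

lemma depth_translate (p : Protocol X Y O) : (p.translate φ ψ).depth = p.depth := by
  induction p with
  | leaf o => rfl
  | nodeA h p₀ p₁ ih₀ ih₁ | nodeB h p₀ p₁ ih₀ ih₁ => simp only [translate, depth, ih₀, ih₁]

lemma exists_run_eq {Z : Type} {V : Set Z} (p : Protocol X Y O) (α : V → X) (β : V → Y) :
    ∃ p' : Protocol Z Z O, p'.depth = p.depth ∧ ∀ z w : V, p'.run z w = p.run (α z) (β w) := by
  refine ⟨p.translate (fun h => Function.extend Subtype.val (h ∘ α) fun _ => false)
    (fun h => Function.extend Subtype.val (h ∘ β) fun _ => false), p.depth_translate, ?_⟩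
  exact fun z w => p.run_translate (fun h => Subtype.val_injective.extend_apply _ _ z)
    fun h => Subtype.val_injective.extend_apply _ _ w

end

lemma run_eq_of_subtree_eq {p q : Protocol X Y O} {π : List Bool} (hq : p.subtree π = some q)
    {x : X} {y : Y} (hx : p.followsA π x) (hy : p.followsB π y) : p.run x y = q.run x y := by
  induction π generalizing p with
  | nil =>
    obtain rfl : p = q := by simpa [subtree] using hq
    rfl
  | cons b π ih =>
    cases p with
    | leaf o => simp [subtree] at hq
    | nodeA h p₀ p₁ | nodeB h p₀ p₁ => cases b <;> simp_all [subtree, followsA, followsB, run]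

lemma isTranscript_append_iff {p q : Protocol X Y O} {π : List Bool} (hq : p.subtree π = some q)
    (π' : List Bool) : p.IsTranscript (π ++ π') ↔ q.IsTranscript π' := by
  induction π generalizing p with
  | nil =>
    obtain rfl : p = q := by simpa [subtree] using hq
    rfl
  | cons b π ih =>
    cases p with
    | leaf o => simp [subtree] at hq
    | nodeA h p₀ p₁ | nodeB h p₀ p₁ => cases b <;> exact ih hq

lemma exists_isTranscript_length_eq_depth (p : Protocol X Y O) :
    ∃ π, p.IsTranscript π ∧ π.length = p.depth := by
  induction p with
  | leaf o => exact ⟨[], rfl, rfl⟩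
  | nodeA h p₀ p₁ ih₀ ih₁ | nodeB h p₀ p₁ ih₀ ih₁ =>
    obtain ⟨π₀, h₀, length₀⟩ := ih₀
    obtain ⟨π₁, h₁, length₁⟩ := ih₁
    obtain hle | hle := le_total p₀.depth p₁.depth
    · exact ⟨true :: π₁, h₁, by simp [depth, length₁, hle]⟩
    · exact ⟨false :: π₀, h₀, by simp [depth, length₀, hle]⟩

end Protocol

/-! ### Monotone formula complexity of rectangles -/

section MonotoneFormula
variable {ι : Type} {A B : Set (ι → Bool)}

/-- No element of `A` lies below an element of `B`, i.e. `mKW` is solvable on `A × B`. -/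
def Separated (A B : Set (ι → Bool)) : Prop := ∀ a ∈ A, ∀ b ∈ B, ¬ a ≤ b

lemma Separated.mono {A' B' : Set (ι → Bool)} (h : Separated A B) (hA : A' ⊆ A) (hB : B' ⊆ B) :
    Separated A' B' := fun a ha b hb => h a (hA ha) b (hB hb)

lemma Separated.exists_coord (h : Separated A B) {a b : ι → Bool} (ha : a ∈ A) (hb : b ∈ B) :
    ∃ i, a i = true ∧ b i = false := by
  simpa [Pi.le_def, Bool.lt_iff, and_comm] using h a ha b hb

/-- The protocol, defined on all inputs, solves `mKW` on the rectangle `A × B`. Working with total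
protocols lets one compare different rectangles without changing the input types. -/
def SolvesOn (A B : Set (ι → Bool)) (p : Protocol (ι → Bool) (ι → Bool) ι) : Prop :=
  ∀ a ∈ A, ∀ b ∈ B, a (p.run a b) = true ∧ b (p.run a b) = false

section
variable {p : Protocol (ι → Bool) (ι → Bool) ι}

lemma SolvesOn.exists_solves_mKWrect (h : SolvesOn A B p) :
    ∃ q : Protocol A B ι, Solves q (mKWrect A B) ∧ q.leaves = p.leaves := by
  refine ⟨p.translate (· ∘ Subtype.val) (· ∘ Subtype.val), fun a b => ?_, p.leaves_translate⟩
  have run_eq : (p.translate (· ∘ Subtype.val) (· ∘ Subtype.val)).run a b = p.run a.1 b.1 :=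
    p.run_translate (fun _ => rfl) fun _ => rfl
  rw [run_eq]
  exact h a a.2 b b.2

lemma SolvesOn.mL_le (h : SolvesOn A B p) : mL A B ≤ p.leaves :=
  Nat.sInf_le h.exists_solves_mKWrect

lemma SolvesOn.exists_leaves_eq_mL (h : SolvesOn A B p) :
    ∃ q, SolvesOn A B q ∧ q.leaves = mL A B := by
  obtain ⟨q, hq, hleaves⟩ := Nat.sInf_mem (s := {k | ∃ p : Protocol A B ι,
    Solves p (mKWrect A B) ∧ p.leaves = k}) ⟨_, h.exists_solves_mKWrect⟩
  refine ⟨q.translate (fun g => Function.extend Subtype.val g fun _ => false)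
    (fun g => Function.extend Subtype.val g fun _ => false), fun a ha b hb => ?_,
    q.leaves_translate.trans hleaves⟩
  rw [q.run_translate (x := ⟨a, ha⟩) (y := ⟨b, hb⟩)
    (fun g => Subtype.val_injective.extend_apply g _ ⟨a, ha⟩)
    fun g => Subtype.val_injective.extend_apply g _ ⟨b, hb⟩]
  exact hq ⟨a, ha⟩ ⟨b, hb⟩

end

-- Alice announces `a i`. If `a i = true`, Bob announces `b i`, and `i` is a solution if
-- `b i = false`.
lemma SolvesOn.split (i : ι) {p₀ p₁ : Protocol (ι → Bool) (ι → Bool) ι}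
    (h₀ : SolvesOn {a ∈ A | a i = false} B p₀) (h₁ : SolvesOn A {b ∈ B | b i = true} p₁) :
    SolvesOn A B (.nodeA (· i) p₀ (.nodeB (· i) (.leaf i) p₁)) := by
  intro a ha b hb
  cases hai : a i with
  | false => simpa [Protocol.run, hai] using h₀ a ⟨ha, hai⟩ b hb
  | true =>
    cases hbi : b i with
    | false => simp [Protocol.run, hai, hbi]
    | true => simpa [Protocol.run, hai, hbi] using h₁ a ha b ⟨hb, hbi⟩

lemma exists_solvesOn_of_forall_exists_mem [Nonempty ι] (T : Finset ι)
    (h : ∀ a ∈ A, ∀ b ∈ B, ∃ i ∈ T, a i = true ∧ b i = false) :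
    ∃ p, SolvesOn A B p ∧ p.leaves + 1 ≤ 2 ^ (#T + 1) := by
  induction T using Finset.induction_on generalizing A B with
  | empty =>
    refine ⟨.leaf (Classical.arbitrary ι), fun a ha b hb => ?_, by simp [Protocol.leaves]⟩
    simpa using h a ha b hb
  | insert i T hi ih =>
    obtain ⟨p₀, h₀, leaves₀⟩ := ih (A := {a ∈ A | a i = false}) (B := B) fun a ha b hb => by
      obtain ⟨j, hj, haj, hbj⟩ := h a ha.1 b hb
      exact ⟨j, Finset.mem_of_mem_insert_of_ne hj (by rintro rfl; simp [ha.2] at haj), haj, hbj⟩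
    obtain ⟨p₁, h₁, leaves₁⟩ := ih (A := A) (B := {b ∈ B | b i = true}) fun a ha b hb => by
      obtain ⟨j, hj, haj, hbj⟩ := h a ha b hb.1
      exact ⟨j, Finset.mem_of_mem_insert_of_ne hj (by rintro rfl; simp [hb.2] at hbj), haj, hbj⟩
    refine ⟨_, h₀.split i h₁, ?_⟩
    rw [Finset.card_insert_of_notMem hi, pow_succ]
    simp only [Protocol.leaves]
    omega

lemma Separated.exists_solvesOn [Nonempty ι] [Fintype ι] (h : Separated A B) :
    ∃ p, SolvesOn A B p ∧ p.leaves + 1 ≤ 2 ^ (Fintype.card ι + 1) :=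
  exists_solvesOn_of_forall_exists_mem Finset.univ fun a ha b hb => by
    simpa using h.exists_coord ha hb

lemma Separated.mL_add_one_le_two_pow [Nonempty ι] [Fintype ι] (h : Separated A B) :
    mL A B + 1 ≤ 2 ^ (Fintype.card ι + 1) := by
  obtain ⟨p, hp, hleaves⟩ := h.exists_solvesOn
  exact (Nat.add_le_add_right hp.mL_le 1).trans hleaves

lemma Separated.mL_add_one_le_add [Nonempty ι] [Finite ι] (h : Separated A B) (i : ι) :
    mL A B + 1 ≤ (mL {a ∈ A | a i = false} B + 1) + (mL A {b ∈ B | b i = true} + 1) := by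
  cases nonempty_fintype ι
  obtain ⟨_, hp₀, -⟩ := (h.mono (A' := {a ∈ A | a i = false}) (Set.sep_subset _ _)
    subset_rfl).exists_solvesOn
  obtain ⟨_, hp₁, -⟩ := (h.mono (B' := {b ∈ B | b i = true}) subset_rfl
    (Set.sep_subset _ _)).exists_solvesOn
  obtain ⟨q₀, hq₀, leaves₀⟩ := hp₀.exists_leaves_eq_mL
  obtain ⟨q₁, hq₁, leaves₁⟩ := hp₁.exists_leaves_eq_mL
  have := (hq₀.split i hq₁).mL_le
  simp only [Protocol.leaves] at this
  omega

lemma nonempty_of_two_le_mL [Nonempty ι] (h : 2 ≤ mL A B) : A.Nonempty ∧ B.Nonempty := by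
  by_contra hempty
  have hleaf : SolvesOn A B (.leaf (Classical.arbitrary ι)) :=
    fun a ha b hb => absurd ⟨⟨a, ha⟩, ⟨b, hb⟩⟩ hempty
  exact absurd (h.trans hleaf.mL_le) (by simp [Protocol.leaves])

end MonotoneFormula

/-! ### Extracting a hard collection from a live transcript -/

lemma exists_lt_card_log_eq_mul_two_pow {Ω : Type*} [Fintype Ω] {g : Ω → ℕ} {M c : ℕ}
    (hg : ∀ W, g W < 2 ^ M) (hM : M ≠ 0) (h : M * (2 * c) < ∑ W, g W) :
    ∃ k, c < #{W | Nat.log 2 (g W) = k} * 2 ^ k := by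
  by_contra! hle
  refine h.not_ge ?_
  calc ∑ W, g W ≤ ∑ W, 2 ^ (Nat.log 2 (g W) + 1) :=
        Finset.sum_le_sum fun W _ => (Nat.lt_pow_succ_log_self (by norm_num) _).le
    _ = ∑ k ∈ Finset.range M, #{W | Nat.log 2 (g W) = k} * 2 ^ (k + 1) := by
        rw [← Finset.sum_fiberwise_of_maps_to (t := Finset.range M) fun W _ =>
          Finset.mem_range.2 (Nat.log_lt_of_lt_pow' hM (hg W))]
        refine Finset.sum_congr rfl fun k _ => ?_
        rw [Finset.sum_congr rfl fun W hW => by rw [(Finset.mem_filter.1 hW).2],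
          Finset.sum_const, smul_eq_mul]
    _ ≤ ∑ _k ∈ Finset.range M, 2 * c := by
        refine Finset.sum_le_sum fun k _ => ?_
        rw [pow_succ]
        linarith [hle k]
    _ = M * (2 * c) := by rw [Finset.sum_const, Finset.card_range, smul_eq_mul]

lemma card_mul_card_pow_le_of_const {N Λ : Type*} [Fintype N] [Fintype Λ]
    {V : Finset (N → Λ)} {I : Finset N} (h : ∀ W ∈ V, ∀ W' ∈ V, ∀ e ∈ I, W e = W' e) :
    #V * Fintype.card Λ ^ #I ≤ Fintype.card Λ ^ Fintype.card N := by
  obtain rfl | ⟨W₀, hW₀⟩ := V.eq_empty_or_nonempty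
  · simp
  have V_subset : V ⊆ Fintype.piFinset fun e => if e ∈ I then {W₀ e} else Finset.univ := by
    intro W hW
    refine Fintype.mem_piFinset.2 fun e => ?_
    split_ifs with he
    · exact Finset.mem_singleton.2 (h W hW W₀ hW₀ e he)
    · exact Finset.mem_univ _
  calc #V * Fintype.card Λ ^ #I
      ≤ (∏ e, if e ∈ I then 1 else Fintype.card Λ) * Fintype.card Λ ^ #I := by
        refine Nat.mul_le_mul_right _ ((Finset.card_le_card V_subset).trans_eq ?_)
        simp only [Fintype.card_piFinset, apply_ite Finset.card, Finset.card_singleton,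
          Finset.card_univ]
    _ = Fintype.card Λ ^ #Iᶜ * Fintype.card Λ ^ #I := by
        rw [Finset.prod_ite, Finset.prod_const_one, one_mul, Finset.prod_const]
        congr 3
        ext e
        simp
    _ = Fintype.card Λ ^ Fintype.card N := by
        rw [← pow_add, Finset.card_compl_add_card]

section Reveal
variable {ι : Type}

/-- The elements of `A` vanishing on `Z`. -/
def zeroOn (A : Set (ι → Bool)) (Z : Finset ι) : Set (ι → Bool) := {a ∈ A | ∀ i ∈ Z, a i = false}

/-- The elements of `B` equal to `1` on `U`. -/
def oneOn (B : Set (ι → Bool)) (U : Finset ι) : Set (ι → Bool) := {b ∈ B | ∀ i ∈ U, b i = true}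

lemma zeroOn_empty (A : Set (ι → Bool)) : zeroOn A ∅ = A := by simp [zeroOn]

lemma oneOn_empty (B : Set (ι → Bool)) : oneOn B ∅ = B := by simp [oneOn]

/-- The rectangle obtained from `A × B` by revealing the rows in `Z ∪ U`, with Alice's bits equal to
`0` on `Z` and Bob's bits equal to `1` on `U`, has formula complexity at least `2 ^ k`, up to a
factor of two for each revealed row. -/
def StaysHard (A B : Set (ι → Bool)) (k : ℕ) (Z U : Finset ι) : Prop :=
  2 ^ k ≤ (mL (zeroOn A Z) (oneOn B U) + 1) * 2 ^ (#Z + #U)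

section
variable {A B : Set (ι → Bool)} {k : ℕ} {Z U : Finset ι} [Nonempty ι]

lemma StaysHard.nonempty (h : StaysHard A B k Z U) (hk : 2 * 2 ^ (#Z + #U) < 2 ^ k) :
    (zeroOn A Z).Nonempty ∧ (oneOn B U).Nonempty := by
  refine nonempty_of_two_le_mL ?_
  have := lt_of_mul_lt_mul_right (hk.trans_le h) (Nat.zero_le _)
  omega

variable [Finite ι] [DecidableEq ι]

lemma StaysHard.insert_or_insert (h : StaysHard A B k Z U) (hAB : Separated A B) {i : ι}
    (hZ : i ∉ Z) (hU : i ∉ U) :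
    StaysHard A B k (insert i Z) U ∨ StaysHard A B k Z (insert i U) := by
  have split := (hAB.mono (A' := zeroOn A Z) (B' := oneOn B U) (Set.sep_subset _ _)
    (Set.sep_subset _ _)).mL_add_one_le_add i
  have zeroOn_insert : {a ∈ zeroOn A Z | a i = false} = zeroOn A (insert i Z) := by
    ext a
    simp only [zeroOn, Set.mem_ofPred_eq, Finset.forall_mem_insert]
    tauto
  have oneOn_insert : {b ∈ oneOn B U | b i = true} = oneOn B (insert i U) := by
    ext b
    simp only [oneOn, Set.mem_ofPred_eq, Finset.forall_mem_insert]
    tauto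
  rw [zeroOn_insert, oneOn_insert] at split
  simp only [StaysHard, Finset.card_insert_of_notMem hZ, Finset.card_insert_of_notMem hU,
    add_right_comm _ 1, ← add_assoc, pow_succ] at h ⊢
  by_contra! hsmall
  nlinarith [hsmall.1, hsmall.2, Nat.mul_le_mul_right (2 ^ (#Z + #U)) split]

end

section
variable {Ω : Type*} {𝒜 ℬ : Ω → Set (ι → Bool)} {k : ℕ} {V : Finset Ω} {Z U : Finset ι}
  [Finite ι] [DecidableEq ι] [Nonempty ι]

lemma exists_subset_staysHard_insert (h : ∀ W ∈ V, StaysHard (𝒜 W) (ℬ W) k Z U)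
    (hsep : ∀ W, Separated (𝒜 W) (ℬ W)) {i : ι} (hZ : i ∉ Z) (hU : i ∉ U) :
    ∃ V' ⊆ V, #V ≤ 2 * #V' ∧ ((∀ W ∈ V', StaysHard (𝒜 W) (ℬ W) k (insert i Z) U) ∨
      ∀ W ∈ V', StaysHard (𝒜 W) (ℬ W) k Z (insert i U)) := by
  set V₀ := {W ∈ V | StaysHard (𝒜 W) (ℬ W) k (insert i Z) U}
  set V₁ := {W ∈ V | ¬ StaysHard (𝒜 W) (ℬ W) k (insert i Z) U}
  have cover : #V₀ + #V₁ = #V := Finset.card_filter_add_card_filter_not _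
  obtain hle | hle := le_total #V₁ #V₀
  · exact ⟨V₀, Finset.filter_subset _ _, by omega, Or.inl fun W hW => (Finset.mem_filter.1 hW).2⟩
  · refine ⟨V₁, Finset.filter_subset _ _, by omega, Or.inr fun W hW => ?_⟩
    obtain ⟨hWV, hW₀⟩ := Finset.mem_filter.1 hW
    exact ((h W hWV).insert_or_insert (hsep W) hZ hU).resolve_left hW₀

lemma exists_subset_staysHard_union (h : ∀ W ∈ V, StaysHard (𝒜 W) (ℬ W) k Z U)
    (hsep : ∀ W, Separated (𝒜 W) (ℬ W)) {T : Finset ι} (hT : Disjoint (Z ∪ U) T) :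
    ∃ V' ⊆ V, ∃ Z' U', Z' ∪ U' = Z ∪ U ∪ T ∧ #Z' + #U' = #Z + #U + #T ∧ #V ≤ 2 ^ #T * #V' ∧
      ∀ W ∈ V', StaysHard (𝒜 W) (ℬ W) k Z' U' := by
  induction T using Finset.induction_on with
  | empty => exact ⟨V, subset_rfl, Z, U, by simp, by simp, by simp, h⟩
  | insert i T hi ih =>
    obtain ⟨hiZU, hTZU⟩ := Finset.disjoint_insert_right.1 hT
    obtain ⟨V₁, hV₁, Z₁, U₁, union₁, card₁, card_le₁, hard₁⟩ := ih hTZU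
    have hi₁ : i ∉ Z₁ ∪ U₁ := by
      rw [union₁, Finset.mem_union, not_or]
      exact ⟨hiZU, hi⟩
    obtain ⟨hiZ₁, hiU₁⟩ := not_or.1 (Finset.mem_union.not.1 hi₁)
    obtain ⟨V₂, hV₂, card_le₂, hard₂⟩ := exists_subset_staysHard_insert hard₁ hsep hiZ₁ hiU₁
    have card_le : #V ≤ 2 ^ #(insert i T) * #V₂ := by
      rw [Finset.card_insert_of_notMem hi, pow_succ, mul_assoc]
      exact card_le₁.trans (Nat.mul_le_mul_left _ card_le₂)
    obtain hard₂ | hard₂ := hard₂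
    · refine ⟨V₂, hV₂.trans hV₁, insert i Z₁, U₁, ?_, ?_, card_le, hard₂⟩
      · rw [Finset.insert_union, union₁, Finset.union_insert]
      · rw [Finset.card_insert_of_notMem hiZ₁, Finset.card_insert_of_notMem hi]
        omega
    · refine ⟨V₂, hV₂.trans hV₁, Z₁, insert i U₁, ?_, ?_, card_le, hard₂⟩
      · rw [Finset.union_insert, union₁, Finset.union_insert]
      · rw [Finset.card_insert_of_notMem hiU₁, Finset.card_insert_of_notMem hi]
        omega

end

end Reveal

lemma exists_fiber_of_not_isSpread {N Λ : Type*} {c L : ℕ} (hL : 0 < L) {F : Finset N}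
    {V : Finset (N → Λ)} (h : ¬ IsSpread (c / L) F V) :
    ∃ J ⊆ F, ∃ w, J.Nonempty ∧ c ^ #J * #V < #(fiber V J w) * L ^ #J := by
  simp only [IsSpread] at h
  push Not at h
  obtain ⟨J, hJ, w, hlt⟩ := h
  refine ⟨J, hJ, w, Finset.nonempty_iff_ne_empty.2 ?_, ?_⟩
  · rintro rfl
    simp [fiber_empty] at hlt
  · have : (0 : ℝ) < (L : ℝ) ^ #J := by positivity
    rw [div_pow, div_mul_eq_mul_div, div_lt_iff₀ this] at hlt
    exact_mod_cast hlt

section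
variable {ι Ω : Type} [Fintype ι] [Nonempty ι] [Fintype Ω] [Nonempty Ω]
  {𝒜 ℬ : Ω → Set (ι → Bool)}

lemma two_le_card_of_le_sum_mL (hsep : ∀ W, Separated (𝒜 W) (ℬ W))
    (hsum : 4 * Fintype.card ι ^ 2 * Fintype.card Ω ≤ ∑ W, mL (𝒜 W) (ℬ W)) :
    2 ≤ Fintype.card ι := by
  by_contra! hlt
  have hone : Fintype.card ι = 1 := by
    have := Fintype.card_pos (α := ι)
    omega
  have sum_le : ∑ W, mL (𝒜 W) (ℬ W) ≤ ∑ _W : Ω, 3 := Finset.sum_le_sum fun W _ => by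
    have := (hsep W).mL_add_one_le_two_pow
    rw [hone] at this
    omega
  rw [Finset.sum_const, smul_eq_mul, Finset.card_univ] at sum_le
  rw [hone] at hsum
  have := Fintype.card_pos (α := Ω)
  omega

lemma exists_lt_card_log_mL_eq_mul_two_pow (hsep : ∀ W, Separated (𝒜 W) (ℬ W))
    (hsum : 4 * Fintype.card ι ^ 2 * Fintype.card Ω ≤ ∑ W, mL (𝒜 W) (ℬ W)) :
    ∃ k, 2 * Fintype.card Ω < #{W | Nat.log 2 (mL (𝒜 W) (ℬ W) + 1) = k} * 2 ^ k := by
  refine exists_lt_card_log_eq_mul_two_pow (M := Fintype.card ι + 2)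
    (fun W => (hsep W).mL_add_one_le_two_pow.trans_lt ?_) (by omega) ?_
  · exact Nat.pow_lt_pow_right (by norm_num) (by omega)
  · have hcard := two_le_card_of_le_sum_mL hsep hsum
    have hΩ := Fintype.card_pos (α := Ω)
    rw [Finset.sum_add_distrib, Finset.sum_const, smul_eq_mul, mul_one, Finset.card_univ]
    nlinarith [Nat.mul_le_mul_right (Fintype.card Ω)
      (show 4 * (Fintype.card ι + 2) ≤ 4 * Fintype.card ι ^ 2 by nlinarith)]

end

section Revealing
variable {ι κ Λ : Type} [Fintype ι] [Fintype κ] [Fintype Λ] [DecidableEq ι] [DecidableEq κ]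

/-- A stage of the process which reveals rows of the inputs in order to make them spread on the
remaining rows: the inputs not yet discarded agree on the entries in `fixed`, all of which lie in
revealed rows. Alice's bits are `0` on the rows `zeros` and Bob's bits are `1` on the rows `ones`.
The bound `lt_card` says that the density of `inputs` on the unfixed entries, weighted by the
remaining formula complexity, does not decrease. -/
structure RevealState (𝒜 ℬ : (ι × κ → Λ) → Set (ι → Bool)) (k : ℕ) where
  inputs : Finset (ι × κ → Λ)
  zeros : Finset ι
  ones : Finset ι
  fixed : Finset (ι × κ)
  staysHard : ∀ W ∈ inputs, StaysHard (𝒜 W) (ℬ W) k zeros ones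
  fst_mem : ∀ e ∈ fixed, e.1 ∈ zeros ∪ ones
  const : ∀ W ∈ inputs, ∀ W' ∈ inputs, ∀ e ∈ fixed, W e = W' e
  lt_card : 2 * Fintype.card (ι × κ → Λ) * 2 ^ (#zeros + #ones) <
    #inputs * Fintype.card Λ ^ #fixed * 2 ^ k

namespace RevealState
variable {𝒜 ℬ : (ι × κ → Λ) → Set (ι → Bool)} {k : ℕ}

/-- The entries of the unrevealed rows. -/
def hidden (σ : RevealState 𝒜 ℬ k) : Finset (ι × κ) := {e | e.1 ∉ σ.zeros ∪ σ.ones}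

lemma mem_hidden {σ : RevealState 𝒜 ℬ k} {e : ι × κ} :
    e ∈ σ.hidden ↔ e.1 ∉ σ.zeros ∪ σ.ones := by
  simp [hidden]

lemma inputs_nonempty (σ : RevealState 𝒜 ℬ k) : σ.inputs.Nonempty := by
  have := σ.lt_card
  contrapose! this
  simp [this]

lemma two_mul_lt_two_pow (σ : RevealState 𝒜 ℬ k) : 2 * 2 ^ (#σ.zeros + #σ.ones) < 2 ^ k := by
  have card_le := card_mul_card_pow_le_of_const σ.const
  rw [← Fintype.card_fun] at card_le
  refine lt_of_mul_lt_mul_left (a := Fintype.card (ι × κ → Λ)) ?_ (Nat.zero_le _)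
  calc _ = 2 * Fintype.card (ι × κ → Λ) * 2 ^ (#σ.zeros + #σ.ones) := by ring
    _ < #σ.inputs * Fintype.card Λ ^ #σ.fixed * 2 ^ k := σ.lt_card
    _ ≤ _ := Nat.mul_le_mul_right _ card_le

-- Each entry fixed by a violation of spreadness gains a factor of four in density, which pays for
-- revealing its row: a factor of two in the number of inputs, and one in formula complexity.
lemma lt_card_mul_of_lt_card_fiber [Nonempty Λ] (σ : RevealState 𝒜 ℬ k) {J : Finset (ι × κ)}
    {w : J → Λ} {V : Finset (ι × κ → Λ)} {n : ℕ} (hn : n ≤ #J)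
    (hJ : 4 ^ #J * #σ.inputs < #(fiber σ.inputs J w) * Fintype.card Λ ^ #J)
    (hV : #(fiber σ.inputs J w) ≤ 2 ^ n * #V) :
    2 * Fintype.card (ι × κ → Λ) * 2 ^ (#σ.zeros + #σ.ones + n) <
      #V * Fintype.card Λ ^ (#σ.fixed + #J) * 2 ^ k := by
  refine lt_of_mul_lt_mul_left (a := 2 ^ n) ?_ (Nat.zero_le _)
  set Ω := Fintype.card (ι × κ → Λ)
  set L := Fintype.card Λ
  calc 2 ^ n * (2 * Ω * 2 ^ (#σ.zeros + #σ.ones + n))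
      = 4 ^ n * (2 * Ω * 2 ^ (#σ.zeros + #σ.ones)) := by
        rw [show 4 = 2 * 2 from rfl, mul_pow]
        ring
    _ ≤ 4 ^ #J * (2 * Ω * 2 ^ (#σ.zeros + #σ.ones)) := by
        gcongr
        norm_num
    _ ≤ 4 ^ #J * (#σ.inputs * L ^ #σ.fixed * 2 ^ k) := Nat.mul_le_mul_left _ σ.lt_card.le
    _ = (4 ^ #J * #σ.inputs) * (L ^ #σ.fixed * 2 ^ k) := by ring
    _ < (#(fiber σ.inputs J w) * L ^ #J) * (L ^ #σ.fixed * 2 ^ k) := by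
        gcongr
    _ ≤ (2 ^ n * #V * L ^ #J) * (L ^ #σ.fixed * 2 ^ k) := by gcongr
    _ = 2 ^ n * (#V * L ^ (#σ.fixed + #J) * 2 ^ k) := by ring

lemma exists_card_lt_card [Nonempty ι] [Nonempty Λ] (σ : RevealState 𝒜 ℬ k)
    (hsep : ∀ W, Separated (𝒜 W) (ℬ W))
    (h : ¬ IsSpread (4 / Fintype.card Λ) σ.hidden σ.inputs) :
    ∃ σ' : RevealState 𝒜 ℬ k, #(σ.zeros ∪ σ.ones) < #(σ'.zeros ∪ σ'.ones) := by
  obtain ⟨J, hJ, w, hJne, hlt⟩ := exists_fiber_of_not_isSpread (c := 4) Fintype.card_pos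
    (by exact_mod_cast h)
  have fiber_le : fiber σ.inputs J w ⊆ σ.inputs := fiber_subset _ _ _
  set T := J.image Prod.fst
  have disjoint_rows : Disjoint (σ.zeros ∪ σ.ones) T := by
    refine Finset.disjoint_right.2 fun i hi => ?_
    obtain ⟨e, he, rfl⟩ := Finset.mem_image.1 hi
    exact mem_hidden.1 (hJ he)
  have disjoint_fixed : Disjoint σ.fixed J :=
    Finset.disjoint_left.2 fun e he heJ => mem_hidden.1 (hJ heJ) (σ.fst_mem e he)
  obtain ⟨V', hV', Z', U', hunion, hcard, hcardV, hhard⟩ := exists_subset_staysHard_union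
    (fun W hW => σ.staysHard W (fiber_le hW)) hsep disjoint_rows
  refine ⟨⟨V', Z', U', σ.fixed ∪ J, hhard, fun e he => ?_, fun W hW W' hW' e he => ?_, ?_⟩, ?_⟩
  · rw [hunion]
    exact (Finset.mem_union.1 he).elim (fun he => Finset.mem_union_left _ (σ.fst_mem e he))
      fun he => Finset.mem_union_right _ (Finset.mem_image_of_mem _ he)
  · obtain ⟨hW, rfl⟩ := mem_fiber.1 (hV' hW)
    obtain ⟨hW', heq⟩ := mem_fiber.1 (hV' hW')
    exact (Finset.mem_union.1 he).elim (σ.const W hW W' hW' e)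
      fun he => (restrict_eq_restrict_iff.1 heq e he).symm
  · rw [hcard, Finset.card_union_of_disjoint disjoint_fixed]
    exact σ.lt_card_mul_of_lt_card_fiber Finset.card_image_le hlt hcardV
  · rw [hunion, Finset.card_union_of_disjoint disjoint_rows]
    exact Nat.lt_add_of_pos_right (hJne.image _).card_pos

lemma exists_isSpread [Nonempty ι] [Nonempty Λ] (σ : RevealState 𝒜 ℬ k)
    (hsep : ∀ W, Separated (𝒜 W) (ℬ W)) :
    ∃ σ' : RevealState 𝒜 ℬ k, IsSpread (4 / Fintype.card Λ) σ'.hidden σ'.inputs := by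
  by_contra! hno
  have unbounded : ∀ n, ∃ σ' : RevealState 𝒜 ℬ k, n ≤ #(σ'.zeros ∪ σ'.ones) := fun n => by
    induction n with
    | zero => exact ⟨σ, Nat.zero_le _⟩
    | succ n ih =>
      obtain ⟨σ₁, hσ₁⟩ := ih
      exact (σ₁.exists_card_lt_card hsep (hno σ₁)).imp fun _ h => hσ₁.trans_lt h
  obtain ⟨σ', hσ'⟩ := unbounded (Fintype.card ι + 1)
  exact (Finset.card_le_univ (σ'.zeros ∪ σ'.ones)).not_gt hσ'

/-- The stage at which nothing is revealed and the inputs are those of complexity about `2 ^ k`. -/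
def ofLog (𝒜 ℬ : (ι × κ → Λ) → Set (ι → Bool)) {k : ℕ} (hk : 2 * Fintype.card (ι × κ → Λ) <
    #{W | Nat.log 2 (mL (𝒜 W) (ℬ W) + 1) = k} * 2 ^ k) : RevealState 𝒜 ℬ k where
  inputs := {W | Nat.log 2 (mL (𝒜 W) (ℬ W) + 1) = k}
  zeros := ∅
  ones := ∅
  fixed := ∅
  staysHard W hW := by
    rw [StaysHard, zeroOn_empty, oneOn_empty, Finset.card_empty, pow_zero, mul_one,
      ← (Finset.mem_filter.1 hW).2]
    exact Nat.pow_log_le_self _ (Nat.succ_ne_zero _)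
  fst_mem _ he := absurd he (Finset.notMem_empty _)
  const _ _ _ _ _ he := absurd he (Finset.notMem_empty _)
  lt_card := by simpa using hk

end RevealState

lemma exists_isSpread_of_le_sum_mL [Nonempty ι] [Nonempty Λ]
    {𝒜 ℬ : (ι × κ → Λ) → Set (ι → Bool)} (hsep : ∀ W, Separated (𝒜 W) (ℬ W))
    (hsum : 4 * Fintype.card ι ^ 2 * Fintype.card (ι × κ → Λ) ≤ ∑ W, mL (𝒜 W) (ℬ W)) :
    ∃ (R : Finset ι) (V : Finset (ι × κ → Λ)) (a b : (ι × κ → Λ) → ι → Bool), V.Nonempty ∧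
      IsSpread (4 / Fintype.card Λ) {e | e.1 ∉ R} V ∧ (∀ W ∈ V, a W ∈ 𝒜 W) ∧
      (∀ W ∈ V, b W ∈ ℬ W) ∧
      ∀ W ∈ V, ∀ W' ∈ V, ∀ i, a W i = true → b W' i = false → i ∉ R := by
  obtain ⟨k, hk⟩ := exists_lt_card_log_mL_eq_mul_two_pow hsep hsum
  obtain ⟨σ, hσ⟩ := (RevealState.ofLog 𝒜 ℬ hk).exists_isSpread hsep
  have nonempty : ∀ W, W ∈ σ.inputs →
      (zeroOn (𝒜 W) σ.zeros).Nonempty ∧ (oneOn (ℬ W) σ.ones).Nonempty :=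
    fun W hW => (σ.staysHard W hW).nonempty σ.two_mul_lt_two_pow
  choose! a ha using fun W hW => (nonempty W hW).1
  choose! b hb using fun W hW => (nonempty W hW).2
  refine ⟨σ.zeros ∪ σ.ones, σ.inputs, a, b, σ.inputs_nonempty, hσ, fun W hW => (ha W hW).1,
    fun W hW => (hb W hW).1, fun W hW W' hW' i hai hbi hi => ?_⟩
  obtain hi | hi := Finset.mem_union.1 hi
  · simp [(ha W hW).2 i hi] at hai
  · simp [(hb W' hW').2 i hi] at hbi

end Revealing

/-! ### Choice of parameters -/

section Parameters

lemma two_rpow_pow (x : ℝ) (k : ℕ) : ((2 : ℝ) ^ x) ^ k = 2 ^ (x * k) :=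
  (Real.rpow_mul_natCast zero_le_two x k).symm

lemma two_rpow_mul_two_rpow (x y : ℝ) : (2 : ℝ) ^ x * 2 ^ y = 2 ^ (x + y) :=
  (Real.rpow_add two_pos x y).symm

lemma one_le_logb_two {n : ℕ} (hn : 2 ≤ n) : 1 ≤ Real.logb 2 n := by
  rw [Real.le_logb_iff_rpow_le one_lt_two (by positivity), Real.rpow_one]
  exact_mod_cast hn

lemma four_mul_le_two_rpow_logb {n : ℕ} (hn : 2 ≤ n) : 4 * (n : ℝ) ≤ 2 ^ (3 * Real.logb 2 n) := by
  have hn' : (2 : ℝ) ≤ n := by exact_mod_cast hn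
  rw [mul_comm 3, Real.rpow_mul zero_le_two, Real.rpow_logb two_pos (by norm_num) (by positivity)]
  calc 4 * (n : ℝ) = 2 ^ 2 * n := by norm_num
    _ ≤ n ^ 2 * n := by gcongr
    _ = (n : ℝ) ^ (3 : ℝ) := by norm_cast

variable {t : ℕ} {gd : (Fin t → Bool) → (Fin t → Bool) → Bool}

lemma gramNorm_signMatrix_le_of_disc_le {a : ℝ} (hdisc : disc gd ≤ 2 ^ (-a)) :
    gramNorm (signMatrix gd) ≤ 2 ^ (1 - a / 2 + 2 * t) := by
  have card_eq : (Fintype.card (Fin t → Bool) : ℝ) = 2 ^ (t : ℝ) := by simp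
  have abs_sum_le : ∀ A B, |∑ u ∈ A, ∑ v ∈ B, signMatrix gd u v| ≤ 2 ^ (-a + 2 * t) :=
    fun A B => (abs_sum_signMatrix_le_disc gd A B).trans <| by
      rw [two_mul, Real.rpow_add two_pos, Real.rpow_add two_pos, Real.rpow_natCast]
      gcongr
  refine (gramNorm_signMatrix_le abs_sum_le).trans (Real.sqrt_le_iff.2 ⟨by positivity, ?_⟩)
  rw [card_eq, show (4 : ℝ) = 2 ^ (2 : ℝ) by norm_num, two_rpow_pow]
  simp only [two_rpow_mul_two_rpow]
  refine (congrArg _ ?_).le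
  push_cast
  ring

lemma SimParams.of_disc_le {N : Type*} {η : ℝ} (hη : 0 < η) {k : ℕ} (hk : 12 / η ≤ k)
    {n : ℕ} (hn : 2 ≤ n) {F : Finset N} (hF : #F ≤ n) (hdisc : disc gd ≤ 2 ^ (-(η * t)))
    (ht : 36 * (k + 5) * Real.logb 2 n ≤ η * t) :
    SimParams gd F (4 * n) k (2 ^ (-t + η * t / 6)) (2 ^ ((t : ℝ) / k)) := by
  have k_pos : (0 : ℝ) < k := (by positivity : 0 < 12 / η).trans_le hk
  have one_le_logb := one_le_logb_two hn
  refine ⟨by positivity, ?_, by gcongr, by exact_mod_cast k_pos,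
    Real.one_le_rpow one_le_two (by positivity), ?_, ?_⟩
  · exact_mod_cast show 1 ≤ 4 * n by omega
  · rw [two_rpow_pow, div_mul_cancel₀ _ k_pos.ne']
    simp
  · have div_le : (t : ℝ) / k ≤ η * t / 12 := by
      rw [div_le_iff₀ hη] at hk
      rw [div_le_iff₀ k_pos]
      nlinarith [Nat.cast_nonneg (α := ℝ) t]
    set lg := Real.logb 2 n
    calc (2 : ℝ) ^ ((t : ℝ) / k) * (2 * (4 * n) ^ k) * gramNorm (signMatrix gd) *
          (2 ^ (-t + η * t / 6)) ^ 2 * (4 * n) ^ 4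
        = 2 * 2 ^ ((t : ℝ) / k) * (4 * n) ^ (k + 4) * gramNorm (signMatrix gd) *
          (2 ^ (-t + η * t / 6)) ^ 2 := by ring
      _ ≤ 2 * 2 ^ (η * t / 12) * (2 ^ (3 * lg)) ^ (k + 4) * 2 ^ (1 - η * t / 2 + 2 * t) *
          (2 ^ (-t + η * t / 6)) ^ 2 := by
          gcongr
          · exact gramNorm_nonneg _
          · exact one_le_two
          · exact four_mul_le_two_rpow_logb hn
          · exact gramNorm_signMatrix_le_of_disc_le hdisc
      _ = 2 ^ (2 + 3 * lg * (k + 4) - η * t / 12) := by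
          rw [two_rpow_pow, two_rpow_pow]
          nth_rw 1 [← Real.rpow_one 2]
          simp only [two_rpow_mul_two_rpow]
          push_cast
          ring_nf
      _ ≤ 1 := Real.rpow_le_one_of_one_le_of_nonpos one_le_two (by nlinarith)

lemma four_div_two_rpow_le {a t : ℝ} (ha : 60 ≤ a) : 4 / (2 : ℝ) ^ t ≤ 2 ^ (-t + a / 6) := by
  rw [div_le_iff₀ (by positivity), two_rpow_mul_two_rpow]
  calc (4 : ℝ) = 2 ^ (2 : ℝ) := by norm_num
    _ ≤ 2 ^ (-t + a / 6 + t) := Real.rpow_le_rpow_of_exponent_le one_le_two (by linarith)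

lemma mul_le_depth_of_one_le {a t : ℝ} (ha : 60 ≤ a) {q d : ℕ}
    (h : 1 ≤ (8 * (4 / 2 ^ t) / (2 : ℝ) ^ (-t + a / 6)) ^ q * 4 ^ d) : a / 24 * q ≤ d := by
  have base_eq : 8 * (4 / 2 ^ t) / (2 : ℝ) ^ (-t + a / 6) = 2 ^ (5 - a / 6) := by
    rw [div_eq_iff (by positivity), mul_div_assoc', div_eq_iff (by positivity),
      two_rpow_mul_two_rpow, two_rpow_mul_two_rpow,
      show 5 - a / 6 + (-t + a / 6) + t = (5 : ℝ) by ring]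
    norm_num
  have four_pow : (4 : ℝ) ^ d = 2 ^ (2 * d : ℝ) := by
    rw [← two_rpow_pow]
    norm_num
  rw [base_eq, four_pow, two_rpow_pow, two_rpow_mul_two_rpow] at h
  have exponent_nonneg : 0 ≤ (5 - a / 6) * q + 2 * d := by
    contrapose! h
    exact Real.rpow_lt_one_of_one_lt_of_neg one_lt_two h
  nlinarith [Nat.cast_nonneg (α := ℝ) q]

end Parameters

/-! ### From a live transcript to the depth of its subtree -/

section Live
variable {m ℓ : ℕ} {Λ O : Type} {f : (Fin m → Bool) → Bool} {S : (Fin ℓ → Bool) → O → Prop}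
  {gd : Λ → Λ → Bool}
  {p q : Protocol ((Fin m → Fin ℓ → Λ) × {a : Fin m → Bool // f a = true})
    ((Fin m → Fin ℓ → Λ) × {b : Fin m → Bool // f b = false}) (Fin m × O)}
  {π : List Bool}

lemma separated_Aset_Bset (hf : Monotone f) (W : Fin m → Fin ℓ → Λ) :
    Separated (Aset f p π W) (Bset f p π W) := by
  rintro a ⟨ha, -⟩ b ⟨hb, -⟩ hab
  exact absurd (hf hab) (by rw [ha, hb]; decide)

lemma LiveT.le_sum_mL [Fintype Λ] [DecidableEq Λ] [Nonempty Λ] (h : LiveT f p π) :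
    4 * m ^ 2 * Fintype.card (Fin m × Fin ℓ → Λ) ≤
      ∑ W : Fin m × Fin ℓ → Λ,
        mL (Aset f p π (Function.curry W)) (Bset f p π (Function.curry W)) := by
  have hγ := h.2
  rw [gammaM, le_div_iff₀ (by exact_mod_cast Fintype.card_pos),
    ← Equiv.sum_comp (Equiv.curry (Fin m) (Fin ℓ) Λ),
    ← Fintype.card_congr (Equiv.curry (Fin m) (Fin ℓ) Λ)] at hγ
  exact_mod_cast hγ

lemma exists_depth_eq_of_mem_Aset_Bset (hp : Solves p (starLift f S gd))
    (hq : p.subtree π = some q) {V : Set (Fin m × Fin ℓ → Λ)}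
    {a b : (Fin m × Fin ℓ → Λ) → Fin m → Bool}
    (ha : ∀ W ∈ V, a W ∈ Aset f p π (Function.curry W))
    (hb : ∀ W ∈ V, b W ∈ Bset f p π (Function.curry W)) :
    ∃ p' : Protocol (Fin m × Fin ℓ → Λ) (Fin m × Fin ℓ → Λ) (Fin m × O), p'.depth = q.depth ∧
      ∀ x ∈ V, ∀ y ∈ V, a x (p'.run x y).1 = true ∧ b y (p'.run x y).1 = false ∧
        S (fun j => gd (x ((p'.run x y).1, j)) (y ((p'.run x y).1, j))) (p'.run x y).2 := by
  obtain ⟨p', hdepth, hrun⟩ := q.exists_run_eq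
    (fun W : V => (Function.curry W.1, ⟨a W, (ha W W.2).1⟩))
    (fun W : V => (Function.curry W.1, ⟨b W, (hb W W.2).1⟩))
  refine ⟨p', hdepth, fun x hx y hy => ?_⟩
  rw [hrun ⟨x, hx⟩ ⟨y, hy⟩, ← Protocol.run_eq_of_subtree_eq hq (ha x hx).2 (hb y hy).2]
  exact hp (Function.curry x, ⟨a x, _⟩) (Function.curry y, ⟨b y, _⟩)

end Live

lemma LiveT.mul_Qcomplexity_le_depth {m ℓ t : ℕ} {O : Type} {f : (Fin m → Bool) → Bool}
    {S : (Fin ℓ → Bool) → O → Prop} {gd : (Fin t → Bool) → (Fin t → Bool) → Bool}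
    {p q : Protocol ((Fin m → Fin ℓ → Fin t → Bool) × {a : Fin m → Bool // f a = true})
      ((Fin m → Fin ℓ → Fin t → Bool) × {b : Fin m → Bool // f b = false}) (Fin m × O)}
    {π : List Bool} {η : ℝ} {k : ℕ} [Nonempty (Fin m)] [Nonempty (Fin ℓ)]
    (hπ : LiveT f p π) (hη : 0 < η) (hk : 12 / η ≤ k) (hf : Monotone f)
    (hdisc : disc gd ≤ 2 ^ (-(η * t))) (ht : 36 * (k + 5) * Real.logb 2 (m * ℓ) ≤ η * t)
    (hp : Solves p (starLift f S gd)) (hq : p.subtree π = some q) :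
    η * t / 24 * Qcomplexity S ≤ q.depth := by
  have hsep := fun W : Fin m × Fin ℓ → Fin t → Bool =>
    separated_Aset_Bset (p := p) (π := π) hf (Function.curry W)
  have hsum := hπ.le_sum_mL
  have two_le_mul : 2 ≤ m * ℓ := by
    have := two_le_card_of_le_sum_mL hsep (by simpa only [Fintype.card_fin] using hsum)
    rw [Fintype.card_fin] at this
    exact this.trans (Nat.le_mul_of_pos_right m (Fin.pos_iff_nonempty.2 inferInstance))
  obtain ⟨R, V, a, b, hV, hspread, ha, hb, hR⟩ :=
    exists_isSpread_of_le_sum_mL hsep (by simpa only [Fintype.card_fin] using hsum)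
  obtain ⟨p', hdepth, hrun⟩ := exists_depth_eq_of_mem_Aset_Bset hp hq (V := V) ha hb
  rw [← Nat.cast_mul] at ht
  have one_le_logb := one_le_logb_two two_le_mul
  have sixty_le : 60 ≤ η * t := by nlinarith [Nat.cast_nonneg (α := ℝ) k]
  have params := SimParams.of_disc_le (F := {e : Fin m × Fin ℓ | e.1 ∉ R}) hη hk two_le_mul
    ((Finset.card_le_univ _).trans_eq (by simp)) hdisc ht
  rw [show (Fintype.card (Fin t → Bool) : ℝ) = 2 ^ (t : ℝ) by simp] at hspread
  obtain ⟨n, hn, hweight⟩ := params.exists_one_le_pow_mul (by positivity)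
    (four_div_two_rpow_le sixty_le) hV hspread p'
    (fun x hx y hy j => by simpa using hR x hx y hy _ (hrun x hx y hy).1 (hrun x hx y hy).2.1)
    fun x hx y hy => (hrun x hx y hy).2.2
  rw [hdepth] at hweight
  refine le_trans ?_ (mul_le_depth_of_one_le sixty_le hweight)
  gcongr

lemma Qcomplexity_eq_zero_of_isEmpty {ι O : Type} [IsEmpty ι] {S : (ι → Bool) → O → Prop}
    (hS : ∀ z, ∃ o, S z o) : Qcomplexity S = 0 := by
  obtain ⟨o, ho⟩ := hS isEmptyElim
  refine Nat.sInf_eq_zero.2 (Or.inl ⟨DTree.leaf o, fun z => ?_, rfl⟩)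
  rwa [Subsingleton.elim z isEmptyElim]

lemma nonempty_of_apply_eq_true_of_apply_eq_false {ι : Type*} {f : (ι → Bool) → Bool}
    (hone : ∃ x, f x = true) (hzero : ∃ x, f x = false) : Nonempty ι := by
  by_contra hι
  rw [not_nonempty_iff] at hι
  obtain ⟨⟨x, hx⟩, y, hy⟩ := And.intro hone hzero
  simp [Subsingleton.elim x y, hy] at hx

end

/-- Structure theorem.  For every `η > 0` there exist `c ∈ ℕ` and
`κ > 0` such that: for every protocol `Pr` solving `mKW_f ⊛ (S ◇ gd)` and every live
transcript `π₁` of `Pr`, there is a suffix `π₂` of length at least `κ·Q(S)·t` such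
that `π₁ ∘ π₂` is a transcript of `Pr`. -/
theorem structure_theorem (η : ℝ) (hη : 0 < η) :
    ∃ (c : ℕ) (κ : ℝ), 0 < κ ∧
      ∀ (m ℓ t : ℕ) (O : Type)
        (f : (Fin m → Bool) → Bool) (S : (Fin ℓ → Bool) → O → Prop)
        (gd : (Fin t → Bool) → (Fin t → Bool) → Bool),
        Monotone f → (∃ x, f x = true) → (∃ x, f x = false) →
        (∀ z, ∃ o, S z o) →
        disc gd ≤ (2 : ℝ) ^ (-(η * (t : ℝ))) →
        (c : ℝ) * Real.logb 2 ((m : ℝ) * (ℓ : ℝ)) ≤ (t : ℝ) →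
        ∀ (Pr : Protocol
            ((Fin m → Fin ℓ → (Fin t → Bool)) × {a : Fin m → Bool // f a = true})
            ((Fin m → Fin ℓ → (Fin t → Bool)) × {b : Fin m → Bool // f b = false})
            (Fin m × O)),
          Solves Pr (starLift f S gd) →
          ∀ π₁ : List Bool, LiveT f Pr π₁ →
            ∃ π₂ : List Bool,
              κ * (Qcomplexity S : ℝ) * (t : ℝ) ≤ (π₂.length : ℝ) ∧
              Protocol.IsTranscript Pr (π₁ ++ π₂) := by
  obtain ⟨k, hk⟩ := exists_nat_ge (12 / η)
  obtain ⟨c, hc⟩ := exists_nat_ge (36 * (k + 5) / η)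
  rw [div_le_iff₀ hη] at hc
  refine ⟨c, η / 24, by positivity, ?_⟩
  intro m ℓ t O f S gd hf hone hzero hS hdisc ht Pr hPr π₁ hπ₁
  obtain ⟨q, hq⟩ := Option.isSome_iff_exists.1 hπ₁.1
  obtain ⟨π₂, hπ₂, hlength⟩ := q.exists_isTranscript_length_eq_depth
  refine ⟨π₂, ?_, (Protocol.isTranscript_append_iff hq π₂).2 hπ₂⟩
  obtain rfl | hℓ := ℓ.eq_zero_or_pos
  · simp [Qcomplexity_eq_zero_of_isEmpty hS]
  have := nonempty_of_apply_eq_true_of_apply_eq_false hone hzero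
  have := Fin.pos_iff_nonempty.1 hℓ
  have hlog : 36 * (k + 5) * Real.logb 2 (m * ℓ) ≤ η * t := by
    have logb_nonneg : 0 ≤ Real.logb 2 (m * ℓ : ℕ) :=
      div_nonneg (Real.log_natCast_nonneg _) (Real.log_nonneg one_le_two)
    rw [Nat.cast_mul] at logb_nonneg
    nlinarith
  calc η / 24 * Qcomplexity S * t = η * t / 24 * Qcomplexity S := by ring
    _ ≤ q.depth := hπ₁.mul_Qcomplexity_le_depth hη hk hf hdisc hlog hPr hq
    _ = π₂.length := by rw [hlength]
end
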